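/- arXiv:2405.20480 — 3 statements merged into one kernel-verified Lean document; each statement's English description precedes it below -/
import Mathlib

section
/- Let G be a forest, d = Δ(G) + 1, and h a vertex of G of degree δ(h). Let I_h be the ideal of R_G(d) generated by the images of the variables y_{h1}, …, y_{hd}. Then R_G(d)/I_h ≅ R_{G∖{h}}(d), the ideal I_h is prime, and its height is d − δ(h). -/
open MvPolynomial

/-- The Lovász–Saks–Schrijver ideal `L_G(d)` of a simple graph `G`. -/
noncomputable def lssIdeal (K : Type) [Field K] {V : Type} (G : SimpleGraph V) (d : ℕ) :
    Ideal (MvPolynomial (V × Fin d) K) :=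
  Ideal.span {f | ∃ i j : V, G.Adj i j ∧
    f = ∑ k : Fin d, MvPolynomial.X (i, k) * MvPolynomial.X (j, k)}

/-- The ideal `I_h` of `R_G(d)` generated by the images of the variables
`y_{h1}, …, y_{hd}` attached to the vertex `h`. -/
noncomputable def vertexIdeal (K : Type) [Field K] {V : Type} (G : SimpleGraph V) (d : ℕ)
    (h : V) : Ideal (MvPolynomial (V × Fin d) K ⧸ lssIdeal K G d) :=
  Ideal.span (Set.range fun k : Fin d =>
    Ideal.Quotient.mk (lssIdeal K G d) (MvPolynomial.X (h, k)))


lemma lss_field_aux {L : Type} [Field L] (a b : L) (ha : a ≠ 0) : a * (-b / a) + b = 0 := by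
  field_simp
  ring

lemma lss_supported_congr {K σ A : Type} [Field K] [CommRing A] [Algebra K A] (s : Set σ)
    (φ ψ : MvPolynomial σ K →ₐ[K] A) (h : ∀ i ∈ s, φ (X i) = ψ (X i))
    (q : MvPolynomial σ K) (hq : q ∈ supported K s) : φ q = ψ q := by
  have : Set.EqOn φ ψ (Algebra.adjoin K (X '' s) : Subalgebra K (MvPolynomial σ K)) := by
    apply AlgHom.eqOn_adjoin_iff.2
    rintro _ ⟨i, hi, rfl⟩
    exact h i hi
  exact this hq

lemma lss_adjoin_prime {K σ : Type} [Field K] (gens : Set (MvPolynomial σ K)) (x : σ)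
    (a g : MvPolynomial σ K)
    (hgens : ∀ q ∈ gens, q ∈ supported K ({x}ᶜ : Set σ))
    (ha : a ∈ supported K ({x}ᶜ : Set σ)) (hg : g ∈ supported K ({x}ᶜ : Set σ))
    (hP : (Ideal.span gens).IsPrime) (haP : a ∉ Ideal.span gens)
    (hPa : (Ideal.span gens ⊔ Ideal.span {a}).IsPrime)
    (hf : a * X x + g ∉ Ideal.span gens ⊔ Ideal.span {a}) :
    (Ideal.span gens ⊔ Ideal.span {a * X x + g}).IsPrime := by
  classical
  set P := Ideal.span gens with hPdef
  set f := a * X x + g with hfdef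
  let A := MvPolynomial σ K ⧸ P
  have : IsDomain A := Ideal.Quotient.isDomain P
  let F := FractionRing A
  let ι : MvPolynomial σ K →ₐ[K] F :=
    (IsScalarTower.toAlgHom K A F).comp (Ideal.Quotient.mkₐ K P)
  have hι : ∀ q, ι q = 0 ↔ q ∈ P := by
    intro q
    have : ι q = algebraMap A F (Ideal.Quotient.mk P q) := rfl
    rw [this, FaithfulSMul.algebraMap_eq_zero_iff, Ideal.Quotient.eq_zero_iff_mem]
  let φ : MvPolynomial σ K →ₐ[K] F :=
    aeval (fun i => if i = x then - ι g / ι a else ι (X i))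
  have hφι : ∀ q ∈ supported K ({x}ᶜ : Set σ), φ q = ι q := by
    intro q hq
    refine lss_supported_congr _ φ ι ?_ q hq
    intro i hi
    simp only [φ, aeval_X]
    exact if_neg hi
  have hιa : ι a ≠ 0 := fun h => haP ((hι a).1 h)
  have hφf : φ f = 0 := by
    have hx : φ (X x) = - ι g / ι a := by simp [φ]
    rw [hfdef, map_add, map_mul, hφι a ha, hφι g hg, hx]
    exact lss_field_aux _ _ hιa
  have hnzd : ∀ u, a * u ∈ P ⊔ Ideal.span {f} → u ∈ P ⊔ Ideal.span {f} := by
    intro u hu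
    obtain ⟨π, hπ, r, hr, hsum⟩ := Submodule.mem_sup.1 hu
    obtain ⟨q, rfl⟩ := Ideal.mem_span_singleton'.1 hr
    have h1 : q * f ∈ P ⊔ Ideal.span {a} := by
      have : q * f = a * u - π := by rw [← hsum]; ring
      rw [this]
      refine sub_mem (Ideal.mul_mem_right _ _ (Ideal.mem_sup_right (Ideal.mem_span_singleton_self a)))
        (Ideal.mem_sup_left hπ)
    have h2 := (hPa.mem_or_mem h1).resolve_right hf
    obtain ⟨π', hπ', r', hr', hsum'⟩ := Submodule.mem_sup.1 h2
    obtain ⟨q', rfl⟩ := Ideal.mem_span_singleton'.1 hr'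
    have h3 : a * (u - q' * f) ∈ P := by
      have : a * (u - q' * f) = π + π' * f := by
        have e : a * u = π + q * f := hsum.symm
        rw [mul_sub, e, ← hsum']; ring
      rw [this]
      exact add_mem hπ (Ideal.mul_mem_right _ _ hπ')
    have h4 := (hP.mem_or_mem h3).resolve_left haP
    have : u = (u - q' * f) + q' * f := by ring
    rw [this]
    exact add_mem (Ideal.mem_sup_left h4)
      (Ideal.mem_sup_right (Ideal.mul_mem_left _ _ (Ideal.mem_span_singleton_self f)))
  have hnzdN : ∀ (N : ℕ) u, a ^ N * u ∈ P ⊔ Ideal.span {f} → u ∈ P ⊔ Ideal.span {f} := by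
    intro N
    induction N with
    | zero => intro u hu; simpa using hu
    | succ N ih =>
      intro u hu
      apply ih
      apply hnzd
      rwa [← mul_assoc, ← pow_succ']
  have hred : ∀ u : MvPolynomial σ K, ∃ N : ℕ, ∃ u' : MvPolynomial σ K,
      a ^ N * u - u' ∈ Ideal.span {f} ∧ φ u' = ι u' := by
    intro u
    induction u using MvPolynomial.induction_on with
    | C r => exact ⟨0, C r, by simp, hφι _ (Subalgebra.algebraMap_mem _ r)⟩
    | add p q hp hq =>
      obtain ⟨N, p', h1, h2⟩ := hp
      obtain ⟨M, q', h3, h4⟩ := hq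
      refine ⟨N + M, a ^ M * p' + a ^ N * q', ?_, ?_⟩
      · have : a ^ (N + M) * (p + q) - (a ^ M * p' + a ^ N * q') =
          a ^ M * (a ^ N * p - p') + a ^ N * (a ^ M * q - q') := by ring
        rw [this]
        exact add_mem (Ideal.mul_mem_left _ _ h1) (Ideal.mul_mem_left _ _ h3)
      · simp only [map_add, map_mul, map_pow, h2, h4, hφι a ha]
    | mul_X p i hp =>
      obtain ⟨N, p', h1, h2⟩ := hp
      by_cases hi : i = x
      · subst hi
        refine ⟨N + 1, p' * (-g), ?_, ?_⟩
        · have : a ^ (N + 1) * (p * X i) - p' * (-g) =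
            a ^ N * p * f - g * (a ^ N * p - p') := by rw [hfdef]; ring
          rw [this]
          exact sub_mem (Ideal.mul_mem_left _ _ (Ideal.mem_span_singleton_self f))
            (Ideal.mul_mem_left _ _ h1)
        · simp only [map_mul, map_neg, h2, hφι g hg]
      · refine ⟨N, p' * X i, ?_, ?_⟩
        · have : a ^ N * (p * X i) - p' * X i = X i * (a ^ N * p - p') := by ring
          rw [this]
          exact Ideal.mul_mem_left _ _ h1
        · rw [map_mul, map_mul, h2, hφι (X i) (X_mem_supported.2 hi)]
  have hker : P ⊔ Ideal.span {f} = RingHom.ker φ := by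
    apply le_antisymm
    · refine sup_le ?_ ?_
      · refine Ideal.span_le.2 ?_
        intro q hq
        change φ q = 0
        rw [hφι q (hgens q hq), hι]
        exact Ideal.subset_span hq
      · refine Ideal.span_le.2 ?_
        rintro _ rfl
        exact hφf
    · intro u hu
      have hu0 : φ u = 0 := hu
      obtain ⟨N, u', h1, h2⟩ := hred u
      have h3 : φ (a ^ N * u - u') = 0 := by
        obtain ⟨q, hq⟩ := Ideal.mem_span_singleton'.1 h1
        rw [← hq, map_mul, hφf, mul_zero]
      have h4 : u' ∈ P := by
        rw [← hι, ← h2]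
        simpa [hu0] using h3
      apply hnzdN N
      have : a ^ N * u = u' + (a ^ N * u - u') := by ring
      rw [this]
      exact add_mem (Ideal.mem_sup_left h4) (Ideal.mem_sup_right h1)
  rw [hker]
  exact RingHom.ker_isPrime φ

lemma lss_exists_leaf {V : Type} [Finite V] (G : SimpleGraph V) (hG : G.IsAcyclic) {u v : V}
    (huv : G.Adj u v) : ∃ h p, G.Adj h p ∧ ∀ w, G.Adj h w → w = p := by
  classical
  have := Fintype.ofFinite V
  let c := G.connectedComponentMk u
  have ht := hG.isTree_connectedComponent c
  have : Nontrivial c := by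
    refine ⟨⟨u, rfl⟩, ⟨v, ?_⟩, ?_⟩
    · exact SimpleGraph.ConnectedComponent.sound huv.symm.reachable
    · intro e
      exact huv.ne (congrArg Subtype.val e)
  obtain ⟨⟨h, hh⟩, hdeg⟩ := ht.exists_vert_degree_one_of_nontrivial
  rw [SimpleGraph.degree_eq_one_iff_existsUnique_adj] at hdeg
  obtain ⟨⟨p, hp⟩, h1, h2⟩ := hdeg
  refine ⟨h, p, h1, ?_⟩
  intro w hw
  have hwc : w ∈ c := by
    have : G.connectedComponentMk h = c := hh
    change G.connectedComponentMk w = c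
    rw [← this]
    exact SimpleGraph.ConnectedComponent.sound hw.symm.reachable
  exact congrArg Subtype.val (h2 ⟨w, hwc⟩ hw)

lemma lss_span_X_prime {K σ : Type} [Field K] (T : Set σ) :
    (Ideal.span ((X : σ → MvPolynomial σ K) '' T)).IsPrime := by
  classical
  let φ : MvPolynomial σ K →ₐ[K] MvPolynomial σ K := aeval (fun i => if i ∈ T then 0 else X i)
  have h1 : ∀ q, q - φ q ∈ Ideal.span ((X : σ → MvPolynomial σ K) '' T) := by
    intro q
    induction q using MvPolynomial.induction_on with
    | C r => simp [φ]
    | add p q hp hq =>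
      have : p + q - φ (p + q) = (p - φ p) + (q - φ q) := by rw [map_add]; ring
      rw [this]
      exact add_mem hp hq
    | mul_X p i hp =>
      by_cases hi : i ∈ T
      · have : φ (X i) = 0 := by simp [φ, hi]
        rw [map_mul, this, mul_zero, sub_zero]
        exact Ideal.mul_mem_left _ _ (Ideal.subset_span ⟨i, hi, rfl⟩)
      · have : φ (X i) = X i := by simp [φ, hi]
        rw [map_mul, this, ← sub_mul]
        exact Ideal.mul_mem_right _ _ hp
  have hker : Ideal.span ((X : σ → MvPolynomial σ K) '' T) = RingHom.ker φ := by
    apply le_antisymm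
    · refine Ideal.span_le.2 ?_
      rintro _ ⟨i, hi, rfl⟩
      change φ (X i) = 0
      simp [φ, hi]
    · intro q hq
      have := h1 q
      rwa [show φ q = 0 from hq, sub_zero] at this
  rw [hker]
  exact RingHom.ker_isPrime φ

/-- The LSS ideal together with the variables in `T`. -/
noncomputable def lssGen (K : Type) [Field K] {V : Type} (G : SimpleGraph V) (d : ℕ)
    (T : Set (V × Fin d)) : Ideal (MvPolynomial (V × Fin d) K) :=
  lssIdeal K G d ⊔ Ideal.span (X '' T)

lemma lssGen_insert (K : Type) [Field K] {V : Type} (G : SimpleGraph V) (d : ℕ)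
    (T : Set (V × Fin d)) (t : V × Fin d) :
    lssGen K G d (insert t T) = lssGen K G d T ⊔ Ideal.span {X t} := by
  rw [lssGen, lssGen, Set.image_insert_eq, Ideal.span_insert, sup_assoc, sup_comm (Ideal.span {X t})]

lemma lssGen_eval (K : Type) [Field K] {V : Type} (G : SimpleGraph V) (d : ℕ)
    (T : Set (V × Fin d)) (e : V × Fin d → K)
    (h1 : ∀ i j, G.Adj i j → ∑ k : Fin d, e (i, k) * e (j, k) = 0)
    (h2 : ∀ t ∈ T, e t = 0) (q : MvPolynomial (V × Fin d) K) (hq : q ∈ lssGen K G d T) :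
    MvPolynomial.eval e q = 0 := by
  have : lssGen K G d T ≤ RingHom.ker (MvPolynomial.eval e) := by
    refine sup_le (Ideal.span_le.2 ?_) (Ideal.span_le.2 ?_)
    · rintro _ ⟨i, j, hij, rfl⟩
      change MvPolynomial.eval e _ = 0
      simpa using h1 i j hij
    · rintro _ ⟨t, ht, rfl⟩
      change MvPolynomial.eval e _ = 0
      simpa using h2 t ht
  exact this hq

lemma lssGen_X_notMem (K : Type) [Field K] {V : Type} (G : SimpleGraph V) (d : ℕ)
    (T : Set (V × Fin d)) (t : V × Fin d) (ht : t ∉ T) : X t ∉ lssGen K G d T := by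
  classical
  intro h
  have := lssGen_eval K G d T (fun s => if s = t then 1 else 0) ?_ ?_ _ h
  · simp at this
  · intro i j hij
    apply Finset.sum_eq_zero
    intro k _
    have := hij.ne
    by_cases h1 : (i, k) = t
    · have : (j, k) ≠ t := by rintro rfl; simp at h1; exact this h1
      simp [this]
    · simp [h1]
  · intro s hs
    have : s ≠ t := by rintro rfl; exact ht hs
    simp [this]

theorem lss_key (K : Type) [Field K] {V : Type} [Finite V] (d : ℕ) (z : Fin d) (N : ℕ) :
    ∀ G : SimpleGraph V, G.edgeSet.ncard = N → G.IsAcyclic →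
      (∀ v, (G.neighborSet v).ncard < d) →
      ∃ κ : V → V → Fin d, ∀ T : Set (V × Fin d), (∀ v, (v, z) ∉ T) →
        (∀ v w, G.Adj v w → (v, κ v w) ∉ T) → (lssGen K G d T).IsPrime := by
  classical
  induction N with
  | zero =>
    intro G hN _ _
    refine ⟨fun _ _ => z, fun T _ _ => ?_⟩
    have hG : ∀ i j, ¬ G.Adj i j := by
      intro i j hij
      have : G.edgeSet = ∅ := (Set.ncard_eq_zero (Set.toFinite _)).1 hN
      have h2 : s(i, j) ∈ G.edgeSet := hij
      rw [this] at h2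
      exact h2
    have : lssIdeal K G d = ⊥ := by
      rw [lssIdeal, Ideal.span_eq_bot]
      rintro _ ⟨i, j, hij, _⟩
      exact (hG i j hij).elim
    rw [lssGen, this, bot_sup_eq]
    exact lss_span_X_prime T
  | succ N ih =>
    intro G hN hac hdeg
    obtain ⟨u, v, huv⟩ : ∃ u v, G.Adj u v := by
      have : G.edgeSet.Nonempty := by
        rw [← Set.ncard_pos (Set.toFinite _)]; omega
      obtain ⟨e, he⟩ := this
      induction e with
      | h u v => exact ⟨u, v, he⟩
    obtain ⟨h, p, hhp, huniq⟩ := lss_exists_leaf G hac huv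
    have hne : h ≠ p := hhp.ne
    let G' := G.deleteEdges {s(h, p)}
    have hG'le : G' ≤ G := G.deleteEdges_le _
    have hadj : ∀ i j, G'.Adj i j ↔ G.Adj i j ∧ i ≠ h ∧ j ≠ h := by
      intro i j
      simp only [G', SimpleGraph.deleteEdges_adj, Set.mem_singleton_iff, Sym2.eq_iff]
      constructor
      · rintro ⟨h1, h2⟩
        refine ⟨h1, ?_, ?_⟩
        · rintro rfl
          exact h2 (Or.inl ⟨rfl, huniq j h1⟩)
        · rintro rfl
          exact h2 (Or.inr ⟨huniq i h1.symm, rfl⟩)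
      · rintro ⟨h1, h2, h3⟩
        refine ⟨h1, ?_⟩
        rintro (⟨h4, _⟩ | ⟨_, h4⟩)
        · exact h2 h4
        · exact h3 h4
    have hedge : G'.edgeSet = G.edgeSet \ {s(h, p)} := SimpleGraph.edgeSet_deleteEdges _
    have hN' : G'.edgeSet.ncard = N := by
      rw [hedge, Set.ncard_sdiff_singleton_of_mem (show s(h, p) ∈ G.edgeSet from hhp), hN]
      rfl
    have hdeg' : ∀ v, (G'.neighborSet v).ncard < d := fun v =>
      lt_of_le_of_lt (Set.ncard_le_ncard (fun w hw => hG'le hw) (Set.toFinite _)) (hdeg v)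
    obtain ⟨κ', hκ'⟩ := ih G' hN' (hac.anti hG'le) hdeg'
    obtain ⟨c, hc⟩ : ∃ c : Fin d, c ∉ insert z ((fun w => κ' p w) '' G'.neighborSet p) := by
      by_contra hcon
      push Not at hcon
      have huniv : insert z ((fun w => κ' p w) '' G'.neighborSet p) = Set.univ :=
        Set.eq_univ_of_forall hcon
      have h1 : (insert z ((fun w => κ' p w) '' G'.neighborSet p)).ncard = d := by
        rw [huniv, Set.ncard_univ]; simp
      have h2 := Set.ncard_insert_le z ((fun w => κ' p w) '' G'.neighborSet p)
      have h3 := Set.ncard_image_le (f := fun w => κ' p w) (Set.toFinite (G'.neighborSet p))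
      have h4 : (insert h (G'.neighborSet p)).ncard = (G'.neighborSet p).ncard + 1 := by
        refine Set.ncard_insert_of_notMem ?_ (Set.toFinite _)
        intro hh
        exact ((hadj p h).1 hh).2.2 rfl
      have h5 : (insert h (G'.neighborSet p)).ncard ≤ (G.neighborSet p).ncard := by
        apply Set.ncard_le_ncard _ (Set.toFinite _)
        rintro w (rfl | hw)
        · exact hhp.symm
        · exact hG'le hw
      have h6 := hdeg p
      omega
    have hcz : c ≠ z := fun e => hc (by rw [e]; exact Set.mem_insert _ _)
    have hcκ : ∀ w, G'.Adj p w → κ' p w ≠ c := fun w hw e =>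
      hc (Set.mem_insert_of_mem _ ⟨w, hw, e⟩)
    refine ⟨fun v w => if v = h ∨ w = h then c else κ' v w, ?_⟩
    intro T hTz hTκ
    have hTh : (h, c) ∉ T := by simpa using hTκ h p hhp
    have hTp : (p, c) ∉ T := by simpa using hTκ p h hhp.symm
    have hT' : ∀ v w, G'.Adj v w → (v, κ' v w) ∉ T := by
      intro v w hvw
      obtain ⟨h1, h2, h3⟩ := (hadj v w).1 hvw
      simpa [h2, h3] using hTκ v w h1
    have hP := hκ' T hTz hT'
    have hPa : (lssGen K G' d (insert (p, c) T)).IsPrime := by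
      apply hκ'
      · rintro v (hv | hv)
        · exact hcz (congrArg Prod.snd hv).symm
        · exact hTz v hv
      · rintro v w hvw (hv | hv)
        · have h1 : v = p := congrArg Prod.fst hv
          subst h1
          exact hcκ w hvw (congrArg Prod.snd hv)
        · exact hT' v w hvw hv
    let a : MvPolynomial (V × Fin d) K := X (p, c)
    let g : MvPolynomial (V × Fin d) K :=
      ∑ k ∈ Finset.univ.erase c, X (h, k) * X (p, k)
    have hf : a * X (h, c) + g = ∑ k : Fin d, X (h, k) * X (p, k) := by
      rw [← Finset.add_sum_erase Finset.univ _ (Finset.mem_univ c), mul_comm]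
    let gens : Set (MvPolynomial (V × Fin d) K) :=
      {f | ∃ i j : V, G'.Adj i j ∧ f = ∑ k : Fin d, X (i, k) * X (j, k)} ∪ X '' T
    have hgens : Ideal.span gens = lssGen K G' d T := by
      rw [lssGen, lssIdeal, Ideal.span_union]
    have hfinal : lssGen K G d T = Ideal.span gens ⊔ Ideal.span {a * X (h, c) + g} := by
      rw [hgens, hf]
      apply le_antisymm
      · refine sup_le (Ideal.span_le.2 ?_) ?_
        · rintro _ ⟨i, j, hij, rfl⟩
          by_cases hi : i = h
          · subst hi
            rw [huniq j hij]
            exact Ideal.mem_sup_right (Ideal.mem_span_singleton_self _)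
          · by_cases hj : j = h
            · subst hj
              rw [huniq i hij.symm]
              have : ∑ k : Fin d, (X (p, k) * X (j, k) : MvPolynomial (V × Fin d) K) =
                ∑ k : Fin d, X (j, k) * X (p, k) := Finset.sum_congr rfl fun k _ => mul_comm _ _
              rw [this]
              exact Ideal.mem_sup_right (Ideal.mem_span_singleton_self _)
            · exact Ideal.mem_sup_left (Ideal.mem_sup_left
                (Ideal.subset_span ⟨i, j, (hadj i j).2 ⟨hij, hi, hj⟩, rfl⟩))
        · exact le_sup_of_le_left le_sup_right
      · refine sup_le (sup_le ?_ le_sup_right) (le_sup_of_le_left (Ideal.span_le.2 ?_))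
        · refine le_sup_of_le_left (Ideal.span_mono ?_)
          rintro _ ⟨i, j, hij, rfl⟩
          exact ⟨i, j, hG'le hij, rfl⟩
        · rintro _ rfl
          exact Ideal.subset_span ⟨h, p, hhp, rfl⟩
    rw [hfinal]
    have hXs : ∀ (v : V) (k : Fin d), (v, k) ≠ (h, c) →
        (X (v, k) : MvPolynomial (V × Fin d) K) ∈ supported K ({(h, c)}ᶜ : Set (V × Fin d)) :=
      fun v k hvk => X_mem_supported.2 hvk
    apply lss_adjoin_prime gens (h, c) a g
    · rintro q (⟨i, j, hij, rfl⟩ | ⟨⟨v, k⟩, ht, rfl⟩)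
      · obtain ⟨_, h2, h3⟩ := (hadj i j).1 hij
        refine sum_mem fun k _ => mul_mem (hXs _ _ ?_) (hXs _ _ ?_)
        · intro e; exact h2 (congrArg Prod.fst e)
        · intro e; exact h3 (congrArg Prod.fst e)
      · refine hXs _ _ ?_
        intro e
        rw [e] at ht
        exact hTh ht
    · exact hXs _ _ fun e => hne (congrArg Prod.fst e).symm
    · refine sum_mem fun k hk => mul_mem (hXs _ _ ?_) (hXs _ _ ?_)
      · intro e; exact (Finset.mem_erase.1 hk).1 (congrArg Prod.snd e)
      · intro e; exact hne (congrArg Prod.fst e).symm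
    · rw [hgens]; exact hP
    · rw [hgens]; exact lssGen_X_notMem K G' d T _ hTp
    · rw [hgens, ← lssGen_insert]; exact hPa
    · rw [hgens, ← lssGen_insert, hf]
      intro hmem
      have := lssGen_eval K G' d _ (fun s => if (s.1 = h ∨ s.1 = p) ∧ s.2 = z then 1 else 0)
        ?_ ?_ _ hmem
      · simp at this
      · intro i j hij
        obtain ⟨h1, h2, h3⟩ := (hadj i j).1 hij
        have h4 := h1.ne
        apply Finset.sum_eq_zero
        intro k _
        by_cases hip : i = p
        · have : j ≠ p := fun e => h4 (hip.trans e.symm)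
          simp [h3, this]
        · simp [h2, hip]
      · rintro ⟨v, k⟩ ht
        have hk : k ≠ z := by
          rintro rfl
          rcases ht with ht | ht
          · exact hcz (congrArg Prod.snd ht).symm
          · exact hTz v ht
        simp [hk]

/-- The isomorphism `R_G(d) ⧸ I_h ≅ R_{G∖{h}}(d)`. -/
lemma lss_iso (K : Type) [Field K] {V : Type} (G : SimpleGraph V) (d : ℕ) (h : V) :
    Nonempty
        (((MvPolynomial (V × Fin d) K ⧸ lssIdeal K G d) ⧸ vertexIdeal K G d h) ≃+*
          (MvPolynomial ({v : V | v ≠ h} × Fin d) K ⧸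
            lssIdeal K (G.induce {v : V | v ≠ h}) d)) := by
  classical
  let S' := MvPolynomial ({v : V | v ≠ h} × Fin d) K
  let L' := lssIdeal K (G.induce {v : V | v ≠ h}) d
  let pt : V × Fin d → S' ⧸ L' := fun t =>
    if ht : t.1 ≠ h then Ideal.Quotient.mk L' (X (⟨t.1, ht⟩, t.2)) else 0
  have pt_h : ∀ k, pt (h, k) = 0 := by intro k; simp [pt]
  have pt_ne : ∀ v k (hv : v ≠ h), pt (v, k) = Ideal.Quotient.mk L' (X (⟨v, hv⟩, k)) := by
    intro v k hv; simp [pt, hv]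
  let φ0 : MvPolynomial (V × Fin d) K →ₐ[K] S' ⧸ L' := aeval pt
  have hφ0 : ∀ q ∈ lssIdeal K G d, φ0 q = 0 := by
    intro q hq
    have : lssIdeal K G d ≤ RingHom.ker φ0 := by
      refine Ideal.span_le.2 ?_
      rintro _ ⟨i, j, hij, rfl⟩
      change φ0 _ = 0
      simp only [φ0, map_sum, map_mul, aeval_X]
      by_cases hi : i = h
      · subst hi; simp [pt_h]
      by_cases hj : j = h
      · subst hj; simp [pt_h]
      have : ∀ k, pt (i, k) * pt (j, k) =
          Ideal.Quotient.mk L' (X (⟨i, hi⟩, k) * X (⟨j, hj⟩, k)) := by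
        intro k; rw [pt_ne _ _ hi, pt_ne _ _ hj, map_mul]
      simp only [this]
      rw [← map_sum, Ideal.Quotient.eq_zero_iff_mem]
      exact Ideal.subset_span ⟨⟨i, hi⟩, ⟨j, hj⟩, hij, rfl⟩
    exact this hq
  let φ1 : (MvPolynomial (V × Fin d) K ⧸ lssIdeal K G d) →ₐ[K] S' ⧸ L' :=
    Ideal.Quotient.liftₐ _ φ0 hφ0
  have hφ1 : ∀ q, φ1 (Ideal.Quotient.mk _ q) = φ0 q := fun q => rfl
  have hφ1I : ∀ q ∈ vertexIdeal K G d h, φ1 q = 0 := by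
    intro q hq
    have : vertexIdeal K G d h ≤ RingHom.ker φ1 := by
      refine Ideal.span_le.2 ?_
      rintro _ ⟨k, rfl⟩
      change φ1 (Ideal.Quotient.mk _ _) = 0
      rw [hφ1]
      simp [φ0, pt_h]
    exact this hq
  let φ : ((MvPolynomial (V × Fin d) K ⧸ lssIdeal K G d) ⧸ vertexIdeal K G d h) →ₐ[K] S' ⧸ L' :=
    Ideal.Quotient.liftₐ _ φ1 hφ1I
  have hφ : ∀ q, φ (Ideal.Quotient.mk _ (Ideal.Quotient.mk _ q)) = φ0 q := fun q => rfl
  let Q := (MvPolynomial (V × Fin d) K ⧸ lssIdeal K G d) ⧸ vertexIdeal K G d h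
  let mkk : MvPolynomial (V × Fin d) K →ₐ[K] Q :=
    (Ideal.Quotient.mkₐ K (vertexIdeal K G d h)).comp (Ideal.Quotient.mkₐ K (lssIdeal K G d))
  have hmkk : ∀ q, mkk q = Ideal.Quotient.mk _ (Ideal.Quotient.mk _ q) := fun q => rfl
  let ψ0 : S' →ₐ[K] Q := aeval fun t => mkk (X (t.1.1, t.2))
  have hψX : ∀ (v : {v : V | v ≠ h}) (k : Fin d), ψ0 (X (v, k)) = mkk (X (v.1, k)) :=
    fun v k => aeval_X _ _
  have hψ0 : ∀ q ∈ L', ψ0 q = 0 := by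
    intro q hq
    have : L' ≤ RingHom.ker ψ0 := by
      refine Ideal.span_le.2 ?_
      rintro _ ⟨i, j, hij, rfl⟩
      change ψ0 _ = 0
      have e : ψ0 (∑ k : Fin d, X (i, k) * X (j, k)) =
          mkk (∑ k : Fin d, X (i.1, k) * X (j.1, k)) := by
        rw [map_sum, map_sum]
        refine Finset.sum_congr rfl fun k _ => ?_
        rw [map_mul, map_mul, hψX, hψX]
      rw [e, hmkk]
      have : Ideal.Quotient.mk (lssIdeal K G d)
          (∑ k : Fin d, X (i.1, k) * X (j.1, k)) = 0 := by
        rw [Ideal.Quotient.eq_zero_iff_mem]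
        exact Ideal.subset_span ⟨i.1, j.1, hij, rfl⟩
      rw [this, map_zero]
    exact this hq
  let ψ : S' ⧸ L' →ₐ[K] Q := Ideal.Quotient.liftₐ _ ψ0 hψ0
  have hψ : ∀ q, ψ (Ideal.Quotient.mk _ q) = ψ0 q := fun q => rfl
  have h1 : (ψ.comp φ0) = mkk := by
    apply MvPolynomial.algHom_ext
    rintro ⟨v, k⟩
    rw [AlgHom.comp_apply]
    by_cases hv : v = h
    · subst hv
      have e : φ0 (X (v, k)) = 0 := by simp [φ0, pt_h]
      rw [e, map_zero, hmkk, eq_comm, Ideal.Quotient.eq_zero_iff_mem]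
      exact Ideal.subset_span ⟨k, rfl⟩
    · have e : φ0 (X (v, k)) = Ideal.Quotient.mk L' (X (⟨v, hv⟩, k)) := by simp [φ0, pt_ne _ _ hv]
      rw [e, hψ, hψX]
  have h2 : (φ.comp ψ0) = Ideal.Quotient.mkₐ K L' := by
    apply MvPolynomial.algHom_ext
    rintro ⟨⟨v, hv⟩, k⟩
    rw [AlgHom.comp_apply]
    have e : ψ0 (X (⟨v, hv⟩, k)) = mkk (X (v, k)) := hψX _ _
    rw [e, hmkk, hφ]
    simp only [φ0, aeval_X]
    exact pt_ne v k hv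
  refine ⟨RingEquiv.ofBijective φ.toRingHom ⟨?_, ?_⟩⟩
  · apply Function.LeftInverse.injective (g := ψ)
    intro q
    obtain ⟨q, rfl⟩ := Ideal.Quotient.mk_surjective q
    obtain ⟨q, rfl⟩ := Ideal.Quotient.mk_surjective q
    exact congrArg (fun f : MvPolynomial (V × Fin d) K →ₐ[K] Q => f q) h1
  · apply Function.RightInverse.surjective (g := ψ)
    intro q
    obtain ⟨q, rfl⟩ := Ideal.Quotient.mk_surjective q
    exact congrArg (fun f : S' →ₐ[K] S' ⧸ L' => f q) h2

lemma lss_upper (K : Type) [Field K] {V : Type} [Finite V] (G : SimpleGraph V) (d : ℕ) (h : V)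
    (hd : (G.neighborSet h).ncard ≤ d) (hp : (vertexIdeal K G d h).IsPrime) :
    (vertexIdeal K G d h).height ≤ ((d - (G.neighborSet h).ncard : ℕ) : ℕ∞) := by
  classical
  have := Fintype.ofFinite V
  let N := G.neighborSet h
  have hcard : Fintype.card N = N.ncard := by
    rw [← Nat.card_eq_fintype_card]; rfl
  obtain ⟨c⟩ : Nonempty (N ↪ Fin d) := by
    apply Function.Embedding.nonempty_of_card_le
    rw [hcard, Fintype.card_fin]; exact hd
  let mk := Ideal.Quotient.mk (lssIdeal K G d)
  let U : Finset (Fin d) := Finset.univ \ Finset.univ.map c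
  have hU : U.card = d - N.ncard := by
    rw [Finset.card_sdiff_of_subset (Finset.subset_univ _), Finset.card_map, Finset.card_univ,
      Finset.card_univ, hcard, Fintype.card_fin]
  let s := U.image fun k => mk (X (h, k))
  have hs : s.card ≤ d - N.ncard := hU ▸ Finset.card_image_le
  let J : Ideal (MvPolynomial (V × Fin d) K ⧸ lssIdeal K G d) := Ideal.span (s : Set _)
  let M : Matrix N N (MvPolynomial (V × Fin d) K ⧸ lssIdeal K G d) :=
    Matrix.of fun j j' => mk (X (j.1, c j'))
  have hDJ : ∀ j : N, M.det * mk (X (h, c j)) ∈ J := by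
    intro j
    have hMy : ∀ i : N, (M.mulVec fun j' => mk (X (h, c j'))) i ∈ J := by
      intro i
      have h0 : mk (∑ k : Fin d, X (i.1, k) * X (h, k)) = 0 := by
        rw [Ideal.Quotient.eq_zero_iff_mem]
        exact Ideal.subset_span ⟨i.1, h, i.2.symm, rfl⟩
      rw [map_sum, ← Finset.sum_sdiff (Finset.subset_univ (Finset.univ.map c)),
        Finset.sum_map] at h0
      have h1 : (M.mulVec fun j' => mk (X (h, c j'))) i =
          ∑ x, mk (X (i.1, c x) * X (h, c x)) := by
        simp [Matrix.mulVec, dotProduct, M]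
      rw [h1, eq_neg_of_add_eq_zero_right h0]
      refine neg_mem (sum_mem fun k hk => ?_)
      rw [map_mul]
      exact Ideal.mul_mem_left _ _ (Ideal.subset_span (Finset.mem_coe.2
        (Finset.mem_image_of_mem _ hk)))
    have h2 : M.det * mk (X (h, c j)) =
        (M.adjugate.mulVec (M.mulVec fun j' => mk (X (h, c j')))) j := by
      rw [Matrix.mulVec_mulVec, Matrix.adjugate_mul, Matrix.smul_mulVec, Matrix.one_mulVec]
      rfl
    rw [h2]
    exact sum_mem fun i _ => Ideal.mul_mem_left _ _ (hMy i)
  have hD : M.det ∉ vertexIdeal K G d h := by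
    let e : V × Fin d → K := fun t => if hv : t.1 ∈ N then (if c ⟨t.1, hv⟩ = t.2 then 1 else 0) else 0
    have he : ∀ q ∈ lssIdeal K G d, MvPolynomial.eval e q = 0 := by
      intro q hq
      refine lssGen_eval K G d ∅ e ?_ (by simp) q (Ideal.mem_sup_left hq)
      intro i j hij
      apply Finset.sum_eq_zero
      intro k _
      by_cases hi : i ∈ N
      · by_cases hj : j ∈ N
        · by_cases h1 : c ⟨i, hi⟩ = k
          · have : c ⟨j, hj⟩ ≠ k := by
              intro h2
              have := c.injective (h1.trans h2.symm)
              exact hij.ne (congrArg Subtype.val this)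
            simp [e, hj, this]
          · simp [e, hi, h1]
        · simp [e, hj]
      · simp [e, hi]
    let ev : (MvPolynomial (V × Fin d) K ⧸ lssIdeal K G d) →+* K :=
      Ideal.Quotient.lift _ (MvPolynomial.eval e) he
    have hev : ∀ q, ev (mk q) = MvPolynomial.eval e q := fun q => rfl
    have hle : vertexIdeal K G d h ≤ RingHom.ker ev := by
      refine Ideal.span_le.2 ?_
      rintro _ ⟨k, rfl⟩
      change ev (mk _) = 0
      rw [hev]
      have : h ∉ N := G.loopless.irrefl h
      simp [e, this]
    intro hmem
    have h0 : ev M.det = 0 := hle hmem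
    rw [RingHom.map_det] at h0
    have : ev.mapMatrix M = 1 := by
      ext i j
      change ev (mk (X (i.1, c j))) = _
      rw [hev, eval_X]
      have hi := i.2
      simp only [e, hi, dif_pos, Matrix.one_apply]
      by_cases hij : i = j
      · simp [hij]
      · have : c i ≠ c j := fun h => hij (c.injective h)
        simp [hij]
    rw [this, Matrix.det_one] at h0
    exact one_ne_zero h0
  have hmin : vertexIdeal K G d h ∈ J.minimalPrimes := by
    refine ⟨⟨hp, ?_⟩, ?_⟩
    · refine Ideal.span_le.2 ?_
      intro q hq
      obtain ⟨k, _, rfl⟩ := Finset.mem_image.1 (Finset.mem_coe.1 hq)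
      exact Ideal.subset_span ⟨k, rfl⟩
    · rintro Q ⟨hQ, hJQ⟩ hQI
      refine Ideal.span_le.2 ?_
      rintro _ ⟨k, rfl⟩
      by_cases hk : k ∈ U
      · exact hJQ (Ideal.subset_span (Finset.mem_coe.2 (Finset.mem_image_of_mem _ hk)))
      · have : k ∈ Finset.univ.map c := by simpa [U] using hk
        obtain ⟨j, _, rfl⟩ := Finset.mem_map.1 this
        exact (hQ.mem_or_mem (hJQ (hDJ j))).resolve_left fun h' => hD (hQI h')
  refine (Ideal.height_le_card_of_mem_minimalPrimes_span_finset hmin).trans ?_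
  exact_mod_cast hs

lemma lss_lower (K : Type) [Field K] {V : Type} [Finite V] (G : SimpleGraph V) (d : ℕ) (h : V)
    (hac : G.IsAcyclic) (hd : ∀ v, (G.neighborSet v).ncard < d)
    (hp : (vertexIdeal K G d h).IsPrime) :
    ((d - (G.neighborSet h).ncard : ℕ) : ℕ∞) ≤ Order.height
      (⟨vertexIdeal K G d h, hp⟩ : PrimeSpectrum (MvPolynomial (V × Fin d) K ⧸ lssIdeal K G d)) := by
  classical
  have hd0 : 0 < d := lt_of_le_of_lt (Nat.zero_le _) (hd h)
  let z : Fin d := ⟨0, hd0⟩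
  obtain ⟨κ, hκ⟩ := lss_key K d z _ G rfl hac hd
  let B : Set (Fin d) := insert z ((fun w => κ h w) '' G.neighborSet h)
  let U : Finset (Fin d) := Bᶜ.toFinset
  have hUcard : d - (G.neighborSet h).ncard ≤ U.card + 1 := by
    have h1 : B.ncard + Bᶜ.ncard = d := by
      rw [Set.ncard_add_ncard_compl]; simp
    have h2 : Bᶜ.ncard = U.card := Set.ncard_eq_toFinset_card' _
    have h3 := Set.ncard_insert_le z ((fun w => κ h w) '' G.neighborSet h)
    have h4 := Set.ncard_image_le (f := fun w => κ h w) (Set.toFinite (G.neighborSet h))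
    have h5 : B.ncard = (insert z ((fun w => κ h w) '' G.neighborSet h)).ncard := rfl
    omega
  let TT : Finset (Fin d) → Set (V × Fin d) := fun T => {t | t.1 = h ∧ t.2 ∈ T}
  let mk := Ideal.Quotient.mk (lssIdeal K G d)
  let q : Finset (Fin d) → Ideal (MvPolynomial (V × Fin d) K ⧸ lssIdeal K G d) :=
    fun T => (lssGen K G d (TT T)).map mk
  have hle : ∀ T, lssIdeal K G d ≤ lssGen K G d (TT T) := fun T => le_sup_left
  have hcomap : ∀ T, (q T).comap mk = lssGen K G d (TT T) := fun T => Ideal.comap_map_mk (hle T)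
  have hmem : ∀ T k, k ∉ T → mk (X (h, k)) ∉ q T := by
    intro T k hk hm
    have : X (h, k) ∈ (q T).comap mk := hm
    rw [hcomap] at this
    exact lssGen_X_notMem K G d (TT T) (h, k) (fun h' => hk h'.2) this
  have hprime : ∀ T, T ⊆ U → (q T).IsPrime := by
    intro T hT
    have hPr : (lssGen K G d (TT T)).IsPrime := by
      apply hκ
      · rintro v ⟨_, hv⟩
        have := hT hv
        simp only [U, Set.mem_toFinset] at this
        exact this (Set.mem_insert _ _)
      · rintro v w hvw ⟨h1, hv⟩
        have h1 : v = h := h1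
        subst h1
        have := hT hv
        simp only [U, Set.mem_toFinset] at this
        exact this (Set.mem_insert_of_mem _ ⟨w, hvw, rfl⟩)
    apply Ideal.map_isPrime_of_surjective Ideal.Quotient.mk_surjective
    rw [Ideal.mk_ker]
    exact hle T
  have hchain : ∀ T : Finset (Fin d), ∀ hT : T ⊆ U,
      (T.card : ℕ∞) ≤ Order.height
        (⟨q T, hprime T hT⟩ : PrimeSpectrum (MvPolynomial (V × Fin d) K ⧸ lssIdeal K G d)) := by
    intro T
    induction T using Finset.induction_on with
    | empty => intro _; simp
    | insert k T hk ih =>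
      intro hT
      have hT' : T ⊆ U := (Finset.subset_insert _ _).trans hT
      rw [Finset.card_insert_of_notMem hk]
      push_cast
      refine le_trans (add_le_add_left (ih hT') 1) (Order.height_add_one_le ?_)
      rw [← PrimeSpectrum.asIdeal_lt_asIdeal]
      refine lt_of_le_of_ne ?_ ?_
      · refine Ideal.map_mono (sup_le_sup_left (Ideal.span_mono (Set.image_mono ?_)) _)
        rintro t ⟨h1, h2⟩
        exact ⟨h1, Finset.mem_insert_of_mem h2⟩
      · intro e
        apply hmem T k hk
        have e' : q T = q (insert k T) := e
        rw [e']
        exact Ideal.mem_map_of_mem _ (Ideal.mem_sup_right (Ideal.subset_span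
          ⟨(h, k), ⟨rfl, Finset.mem_insert_self _ _⟩, rfl⟩))
  have hzU : z ∉ U := by
    simp only [U, Set.mem_toFinset]
    exact fun h' => h' (Set.mem_insert _ _)
  have hlast := hchain U subset_rfl
  have hlt : (⟨q U, hprime U subset_rfl⟩ :
      PrimeSpectrum (MvPolynomial (V × Fin d) K ⧸ lssIdeal K G d)) <
      ⟨vertexIdeal K G d h, hp⟩ := by
    rw [← PrimeSpectrum.asIdeal_lt_asIdeal]
    refine lt_of_le_of_ne ?_ ?_
    · refine Ideal.map_le_iff_le_comap.2 (sup_le ?_ (Ideal.span_le.2 ?_))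
      · intro f hf
        change mk f ∈ vertexIdeal K G d h
        rw [Ideal.Quotient.eq_zero_iff_mem.2 hf]
        exact zero_mem _
      · rintro _ ⟨⟨v, k⟩, ⟨h1, _⟩, rfl⟩
        have h1 : v = h := h1
        subst h1
        exact Ideal.subset_span ⟨k, rfl⟩
    · intro e
      apply hmem U z hzU
      have e' : q U = vertexIdeal K G d h := e
      rw [e']
      exact Ideal.subset_span ⟨z, rfl⟩
  refine le_trans ?_ (le_trans (add_le_add_left hlast 1) (Order.height_add_one_le hlt))
  exact_mod_cast hUcard

/-- Let `G` be a forest, `d = Δ(G) + 1` and `h` a vertex of degree `δ(h)`.  Then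
`R_G(d) ⧸ I_h ≅ R_{G∖{h}}(d)`, the ideal `I_h` is prime, and its height is `d - δ(h)`. -/
theorem lss_vertex_ideal_prime (K : Type) [Field K] (n d : ℕ) (G : SimpleGraph (Fin n))
    [DecidableRel G.Adj] (hforest : G.IsAcyclic) (hd : d = G.maxDegree + 1) (h : Fin n) :
    Nonempty
        (((MvPolynomial (Fin n × Fin d) K ⧸ lssIdeal K G d) ⧸ vertexIdeal K G d h) ≃+*
          (MvPolynomial ({v : Fin n | v ≠ h} × Fin d) K ⧸
            lssIdeal K (G.induce {v : Fin n | v ≠ h}) d)) ∧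
      ∃ hp : (vertexIdeal K G d h).IsPrime,
        Order.height
            (⟨vertexIdeal K G d h, hp⟩ :
              PrimeSpectrum (MvPolynomial (Fin n × Fin d) K ⧸ lssIdeal K G d)) =
          ((d - G.degree h : ℕ) : ℕ∞) := by
  have hnc : ∀ v, (G.neighborSet v).ncard = G.degree v := by
    intro v
    rw [Set.ncard_eq_toFinset_card']; rfl
  have hdeg : ∀ v, (G.neighborSet v).ncard < d := by
    intro v
    have := G.degree_le_maxDegree v
    rw [hnc]; omega
  obtain ⟨e⟩ := lss_iso K G d h
  have hp : (vertexIdeal K G d h).IsPrime := by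
    let G' := G.induce {v : Fin n | v ≠ h}
    have hdeg' : ∀ v, (G'.neighborSet v).ncard < d := by
      intro v
      refine lt_of_le_of_lt ?_ (hdeg v.1)
      exact Set.ncard_le_ncard_of_injOn Subtype.val (fun w hw => hw)
        (Subtype.val_injective.injOn) (Set.toFinite _)
    have hd0 : 0 < d := by omega
    obtain ⟨κ, hκ⟩ := lss_key K d ⟨0, hd0⟩ _ G' rfl (hforest.induce _) hdeg'
    have h1 := hκ ∅ (fun _ => id) (fun _ _ _ => id)
    rw [lssGen, Set.image_empty, Ideal.span_empty, sup_bot_eq] at h1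
    have : IsDomain (MvPolynomial ({v : Fin n | v ≠ h} × Fin d) K ⧸ lssIdeal K G' d) :=
      Ideal.Quotient.isDomain _
    have := e.toMulEquiv.isDomain
    exact (Ideal.Quotient.isDomain_iff_prime _).1 this
  refine ⟨⟨e⟩, hp, le_antisymm ?_ ?_⟩
  · rw [← PrimeSpectrum.height_eq_orderHeight, ← hnc]
    exact lss_upper K G d h (hdeg h).le hp
  · rw [← hnc]
    exact lss_lower K G d h hforest hdeg hp
end

section
/- Let G be the n-path graph with n ≥ 3 and d = 3. For each i = 2, …, n−1, the ideals P_i and Q_i are prime ideals of S. -/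
open MvPolynomial

/-- The variable `y_{i c}` of the polynomial ring `K[y_{ij} : i ∈ [n], j ∈ [3]]`,
with indices `i ∈ {1, …, n}` and `c ∈ {1, 2, 3}` as in the paper
(and junk value `0` for out-of-range indices). -/
noncomputable def yvar (K : Type) [Field K] (n i c : ℕ) : MvPolynomial (Fin n × Fin 3) K :=
  if h : 1 ≤ i ∧ i ≤ n ∧ 1 ≤ c ∧ c ≤ 3 then
    MvPolynomial.X (⟨i - 1, by omega⟩, ⟨c - 1, by omega⟩)
  else 0

/-- The LSS generator `f_{a(a+1)} = ∑_{k=1}^3 y_{ak} y_{(a+1)k}` associated to the edge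
`{a, a+1}` of the `n`-path graph. -/
noncomputable def pathGen (K : Type) [Field K] (n a : ℕ) : MvPolynomial (Fin n × Fin 3) K :=
  ∑ k : Fin 3, yvar K n a (k.1 + 1) * yvar K n (a + 1) (k.1 + 1)

/-- The LSS ideal `L_G(3) = (f_{12}, …, f_{(n-1)n})` of the `n`-path graph `G`. -/
noncomputable def pathLSS (K : Type) [Field K] (n : ℕ) :
    Ideal (MvPolynomial (Fin n × Fin 3) K) :=
  Ideal.span {g | ∃ a : ℕ, 1 ≤ a ∧ a + 1 ≤ n ∧ g = pathGen K n a}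

/-- The ideal generated by the list `F_i` of all generators of `pathLSS` except
`f_{(i-1)i}` and `f_{i(i+1)}`. -/
noncomputable def exceptIdeal (K : Type) [Field K] (n i : ℕ) :
    Ideal (MvPolynomial (Fin n × Fin 3) K) :=
  Ideal.span {g | ∃ a : ℕ, 1 ≤ a ∧ a + 1 ≤ n ∧ a ≠ i - 1 ∧ a ≠ i ∧ g = pathGen K n a}

/-- The column index `k`: `2` if `i` is even, `3` if `i` is odd. -/
def kcol (i : ℕ) : ℕ := if Even i then 2 else 3

/-- The column index `k̂ = 5 - k`: `3` if `i` is even, `2` if `i` is odd. -/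
def khat (i : ℕ) : ℕ := if Even i then 3 else 2

/-- The ideal `P_i = (y_{i1}, y_{i2}, y_{i3}) + (F_i)` of `S`. -/
noncomputable def Pideal (K : Type) [Field K] (n i : ℕ) :
    Ideal (MvPolynomial (Fin n × Fin 3) K) :=
  Ideal.span {yvar K n i 1, yvar K n i 2, yvar K n i 3} ⊔ exceptIdeal K n i

/-- The ideal `Q_i = I_1(Y_i y_i) + (det Y_i, y_{i k̂}) + (F_i)` of `S`, where `Y_i` is
the `2 × 2` matrix with rows `(y_{(i-1)1}, y_{(i-1)k})`, `(y_{(i+1)1}, y_{(i+1)k})` and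
`y_i` is the column vector `(y_{i1}, y_{ik})`. -/
noncomputable def Qideal (K : Type) [Field K] (n i : ℕ) :
    Ideal (MvPolynomial (Fin n × Fin 3) K) :=
  Ideal.span
      {yvar K n (i - 1) 1 * yvar K n i 1 + yvar K n (i - 1) (kcol i) * yvar K n i (kcol i),
       yvar K n (i + 1) 1 * yvar K n i 1 + yvar K n (i + 1) (kcol i) * yvar K n i (kcol i),
       yvar K n (i - 1) 1 * yvar K n (i + 1) (kcol i) -
         yvar K n (i - 1) (kcol i) * yvar K n (i + 1) 1,
       yvar K n i (khat i)} ⊔ exceptIdeal K n i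

section Algebra

lemma nzd_of_split {R σ : Type} [CommRing R] [DecidableEq σ] (k : σ) (u r : MvPolynomial σ R)
    (hu : ∀ x, u * x = 0 → x = 0)
    (hΘu : eval₂Hom ((Polynomial.C).comp (C : R →+* MvPolynomial σ R))
      (fun s => if s = k then Polynomial.C (X s) * Polynomial.X else Polynomial.C (X s)) u
      = Polynomial.C u * Polynomial.X)
    (hΘr : eval₂Hom ((Polynomial.C).comp (C : R →+* MvPolynomial σ R))
      (fun s => if s = k then Polynomial.C (X s) * Polynomial.X else Polynomial.C (X s)) r
      = Polynomial.C r)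
    (g : MvPolynomial σ R) (hg : (u + r) * g = 0) : g = 0 := by
  set Θ := eval₂Hom ((Polynomial.C).comp (C : R →+* MvPolynomial σ R))
      (fun s => if s = k then Polynomial.C (X s) * Polynomial.X else Polynomial.C (X s)) with hΘ
  have hinv : (Polynomial.evalRingHom (1 : MvPolynomial σ R)).comp Θ = RingHom.id _ := by
    apply MvPolynomial.ringHom_ext
    · intro c; simp [hΘ]
    · intro s
      simp only [hΘ, RingHom.comp_apply, coe_eval₂Hom, eval₂_X]
      split_ifs <;> simp
  have h1 : Θ g = 0 := by
    have h2 : (Polynomial.C u * Polynomial.X + Polynomial.C r) * Θ g = 0 := by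
      rw [← hΘu, ← hΘr, ← map_add, ← map_mul, hg, map_zero]
    rw [← Polynomial.leadingCoeff_eq_zero]
    apply hu
    have h3 := congrArg (fun p => Polynomial.coeff p ((Θ g).natDegree + 1)) h2
    simp only [add_mul, Polynomial.coeff_add, mul_assoc, Polynomial.coeff_C_mul,
      Polynomial.coeff_X_mul, Polynomial.coeff_zero] at h3
    rw [Polynomial.coeff_eq_zero_of_natDegree_lt (Nat.lt_succ_self _), mul_zero, add_zero] at h3
    exact h3
  have := congrArg (fun f => f g) hinv
  simp only [RingHom.comp_apply, h1, map_zero, RingHom.id_apply] at this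
  exact this.symm

lemma X_nzd {R σ : Type} [CommRing R] (k : σ) (x : MvPolynomial σ R) (h : X k * x = 0) : x = 0 := by
  ext m
  have := congrArg (coeff (Finsupp.single k 1 + m)) h
  simpa [coeff_X_mul] using this

lemma C_nzd {R σ : Type} [CommRing R] (c : R) (hc : ∀ y, c * y = 0 → y = 0)
    (x : MvPolynomial σ R) (h : C c * x = 0) : x = 0 := by
  ext m
  have := congrArg (coeff m) h
  simp only [coeff_C_mul, coeff_zero] at this
  simpa using hc _ this

lemma C_dvd_X_mul {R σ : Type} [CommRing R] (a : R) (k : σ) (x : MvPolynomial σ R)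
    (h : C a ∣ X k * x) : C a ∣ x := by
  rw [C_dvd_iff_dvd_coeff] at h ⊢
  intro m
  have := h (Finsupp.single k 1 + m)
  rwa [coeff_X_mul] at this

lemma C_dvd_C_mul {R σ : Type} [CommRing R] (a b : R) (hab : ∀ y, a ∣ b * y → a ∣ y)
    (x : MvPolynomial σ R) (h : C a ∣ C b * x) : C a ∣ x := by
  rw [C_dvd_iff_dvd_coeff] at h ⊢
  intro m
  have := h m
  rw [coeff_C_mul] at this
  exact hab _ this

lemma mem_map_C_iff_map {R σ : Type} [CommRing R] (J : Ideal R) (f : MvPolynomial σ R) :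
    f ∈ J.map (C : R →+* MvPolynomial σ R) ↔ map (Ideal.Quotient.mk J) f = 0 := by
  rw [mem_map_C_iff]
  constructor
  · intro h; ext m; simpa [coeff_map, Ideal.Quotient.eq_zero_iff_mem] using h m
  · intro h m
    have := congrArg (coeff m) h
    simpa [coeff_map, Ideal.Quotient.eq_zero_iff_mem] using this

lemma prime_of_away {A τ : Type} [CommRing A] [IsDomain A] (a : A) (ha : a ≠ 0)
    (I : Ideal (MvPolynomial τ A)) (h1 : ∀ g, C a * g ∈ I → g ∈ I)
    (e : τ → MvPolynomial τ A) (h2 : ∀ t, C a * X t - e t ∈ I)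
    (h3 : ∀ (L : Type) [CommRing L] (ι : A →+* L) (u : L), ι a * u = 1 → ∀ f ∈ I,
      eval₂Hom ((C : L →+* MvPolynomial τ L).comp ι) (fun t => C u * map ι (e t)) f = 0) :
    I.IsPrime := by
  let L := Localization.Away a
  have hL : IsDomain L := IsLocalization.isDomain_localization
    (powers_le_nonZeroDivisors_of_noZeroDivisors ha)
  let q := Ideal.Quotient.mk I
  let QL := Localization.Away (q (C a))
  have hinj : Function.Injective (algebraMap (MvPolynomial τ A ⧸ I) QL) := by
    apply IsLocalization.injective QL (M := Submonoid.powers (q (C a)))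
    rw [Submonoid.powers_le]
    rw [mem_nonZeroDivisors_iff_right]
    intro x hx
    obtain ⟨x, rfl⟩ := Ideal.Quotient.mk_surjective x
    rw [← map_mul, Ideal.Quotient.eq_zero_iff_mem, mul_comm] at hx
    exact Ideal.Quotient.eq_zero_iff_mem.2 (h1 _ hx)
  let u : L := IsLocalization.Away.invSelf a
  have hu : algebraMap A L a * u = 1 := IsLocalization.Away.mul_invSelf a
  let φ := eval₂Hom ((C : L →+* MvPolynomial τ L).comp (algebraMap A L))
    (fun t => C u * map (algebraMap A L) (e t))
  let γ : A →+* QL := (algebraMap _ QL).comp (q.comp C)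
  have hγ : IsUnit (γ a) := IsLocalization.Away.algebraMap_isUnit (q (C a))
  let lam : L →+* QL := IsLocalization.Away.lift a hγ
  have hlam : ∀ x, lam (algebraMap A L x) = γ x := fun x => IsLocalization.Away.lift_eq a hγ x
  let ψ : MvPolynomial τ L →+* QL := eval₂Hom lam (fun t => algebraMap _ QL (q (X t)))
  have hψm : ψ.comp (map (algebraMap A L)) = (algebraMap _ QL).comp q := by
    apply MvPolynomial.ringHom_ext
    · intro c; simp [ψ, hlam, γ]
    · intro t; simp [ψ]
  have hψ : ψ.comp φ = (algebraMap _ QL).comp q := by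
    apply MvPolynomial.ringHom_ext
    · intro c; simp [ψ, φ, hlam, γ]
    · intro t
      have e1 : φ (X t) = C u * map (algebraMap A L) (e t) := by simp [φ]
      have e2 : ψ (map (algebraMap A L) (e t)) = algebraMap _ QL (q (e t)) := by
        have := congrArg (fun f => f (e t)) hψm
        simpa using this
      have e3 : q (e t) = q (C a) * q (X t) := by
        rw [← map_mul]; exact (Ideal.Quotient.eq.2 (h2 t)).symm
      have e4 : ψ (C u) = lam u := by simp [ψ]
      have e5 : γ a * lam u = 1 := by rw [← hlam, ← map_mul, hu, map_one]
      rw [RingHom.comp_apply, e1, map_mul, e2, e3, map_mul, e4, RingHom.comp_apply]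
      have e6 : algebraMap _ QL (q (C a)) = γ a := rfl
      rw [e6]
      linear_combination (algebraMap _ QL (q (X t))) * e5
  have hker : I = RingHom.ker φ := by
    apply le_antisymm
    · intro f hf
      exact h3 L (algebraMap A L) u hu f hf
    · intro f hf
      have h5 := congrArg (fun g => g f) hψ
      simp only [RingHom.comp_apply] at h5
      rw [RingHom.mem_ker.1 hf, map_zero] at h5
      have := hinj (h5.symm.trans (map_zero _).symm)
      exact Ideal.Quotient.eq_zero_iff_mem.1 this
  rw [hker]
  exact RingHom.ker_isPrime φ

/-- the linear form -/
noncomputable def lform {A : Type} [CommRing A] (a : Fin 3 → A) : MvPolynomial (Fin 3) A :=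
  ∑ c, C (a c) * X c

lemma lform_eq {A : Type} [CommRing A] (a : Fin 3 → A) (j k t : Fin 3) (hjk : j ≠ k) (hjt : j ≠ t)
    (hkt : k ≠ t) : lform a = C (a j) * X j + C (a k) * X k + C (a t) * X t := by
  unfold lform
  rw [Fin.sum_univ_three]
  fin_cases j <;> fin_cases k <;> fin_cases t <;> simp at hjk hjt hkt ⊢ <;> ring

lemma third (j k : Fin 3) (h : j ≠ k) : ∃ t, j ≠ t ∧ k ≠ t := by
  revert j k; decide

/-- `(a,b)` is a (weakly) regular pair -/
def RegPair {A : Type} [CommRing A] (a b : A) : Prop := ∀ y, a ∣ b * y → a ∣ y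

lemma lform_prime {A : Type} [CommRing A] [IsDomain A] (a : Fin 3 → A) (j k : Fin 3) (hjk : j ≠ k)
    (h0 : a j ≠ 0) (hr : RegPair (a j) (a k)) : (Ideal.span {lform a}).IsPrime := by
  obtain ⟨t, hjt, hkt⟩ := third j k hjk
  have hl := lform_eq a j k t hjk hjt hkt
  apply prime_of_away (a j) h0 _ _ (fun s => if s = j then - (C (a k) * X k + C (a t) * X t)
      else C (a j) * X s)
  · intro s
    split_ifs with hs
    · subst hs
      rw [hl]
      apply Ideal.subset_span
      rw [Set.mem_singleton_iff]; ring
    · simp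
  · intro L _ ι u hu f hf
    obtain ⟨g, rfl⟩ := Ideal.mem_span_singleton.1 hf
    rw [map_mul, hl]
    have hu' : (C (ι (a j)) : MvPolynomial (Fin 3) L) * C u = 1 := by rw [← C_mul, hu, C_1]
    simp only [map_add, map_mul, coe_eval₂Hom, eval₂_C, eval₂_X, RingHom.comp_apply, if_true,
      if_neg hjk.symm, if_neg hjt.symm, map_neg, map_C, map_X]
    linear_combination (0 : MvPolynomial (Fin 3) L) * hu'
  · intro g hg
    obtain ⟨h, hh⟩ := Ideal.mem_span_singleton.1 hg
    have key : C (a j) ∣ h := by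
      rw [← Ideal.mem_span_singleton, ← Set.image_singleton, ← Ideal.map_span,
        mem_map_C_iff_map]
      set m := Ideal.Quotient.mk (Ideal.span {a j})
      have hm : m (a j) = 0 := Ideal.Quotient.eq_zero_iff_mem.2 (Ideal.mem_span_singleton_self _)
      have h4 := congrArg (map m) hh
      rw [hl] at h4
      simp only [map_mul, map_add, map_C, map_X, hm, C_0, zero_mul, zero_add] at h4
      refine nzd_of_split k (C (m (a k)) * X k) (C (m (a t)) * X t) ?_ ?_ ?_ _ h4.symm
      · intro x hx
        rw [mul_assoc] at hx
        apply X_nzd k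
        refine C_nzd _ ?_ _ hx
        intro y hy
        obtain ⟨y, rfl⟩ := Ideal.Quotient.mk_surjective y
        rw [← map_mul, Ideal.Quotient.eq_zero_iff_mem, Ideal.mem_span_singleton] at hy
        exact Ideal.Quotient.eq_zero_iff_mem.2 (Ideal.mem_span_singleton.2 (hr _ hy))
      · simp; ring
      · simp [hkt.symm]
    obtain ⟨h', rfl⟩ := key
    have hc : (C (a j) : MvPolynomial (Fin 3) A) ≠ 0 := by simpa using h0
    have : g = lform a * h' := mul_left_cancel₀ hc (by rw [hh]; ring)
    rw [this]
    exact Ideal.mul_mem_right _ _ (Ideal.mem_span_singleton_self _)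

lemma lform_X_notMem {A : Type} [CommRing A] [IsDomain A] (a : Fin 3 → A) (h0 : ∀ c, a c ≠ 0)
    (j : Fin 3) : (X j : MvPolynomial (Fin 3) A) ∉ Ideal.span {lform a} := by
  intro h
  obtain ⟨k, hjk⟩ : ∃ k, j ≠ k := by clear h; revert j; decide
  obtain ⟨t, hjt, hkt⟩ := third j k hjk
  obtain ⟨g, hg⟩ := Ideal.mem_span_singleton.1 h
  rw [lform_eq a j k t hjk hjt hkt] at hg
  have := congrArg (eval (fun s => if s = j then a k else if s = k then - a j else 0)) hg
  simp [hjk.symm, hjt.symm, hkt.symm] at this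
  apply h0 k
  rw [this]; ring

lemma lform_regPair {A : Type} [CommRing A] [IsDomain A] (a : Fin 3 → A) (h0 : ∀ c, a c ≠ 0)
    (j k : Fin 3) (hjk : j ≠ k) :
    RegPair (Ideal.Quotient.mk (Ideal.span {lform a}) (X j))
      (Ideal.Quotient.mk (Ideal.span {lform a}) (X k)) := by
  obtain ⟨t, hjt, hkt⟩ := third j k hjk
  have hl := lform_eq a j k t hjk hjt hkt
  intro y hy
  obtain ⟨g, rfl⟩ := Ideal.Quotient.mk_surjective y
  obtain ⟨h, hh⟩ := hy
  obtain ⟨h, rfl⟩ := Ideal.Quotient.mk_surjective h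
  rw [← map_mul, ← map_mul, Ideal.Quotient.eq, Ideal.mem_span_singleton] at hh
  obtain ⟨m, hm⟩ := hh
  -- substitution killing X j, X k
  let ε : MvPolynomial (Fin 3) A →+* MvPolynomial (Fin 3) A :=
    eval₂Hom C (fun s => if s = t then X t else 0)
  have hε : ∀ f, f - ε f ∈ Ideal.span {(X j : MvPolynomial (Fin 3) A), X k} := by
    intro f
    have : (Ideal.Quotient.mk (Ideal.span {(X j : MvPolynomial (Fin 3) A), X k})).comp ε =
        Ideal.Quotient.mk (Ideal.span {(X j : MvPolynomial (Fin 3) A), X k}) := by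
      apply MvPolynomial.ringHom_ext
      · intro c; simp [ε]
      · intro s
        by_cases hs : s = t
        · simp [ε, hs]
        · have : s = j ∨ s = k := by
            clear hm hl ε
            revert j k t s; decide
          simp only [ε, RingHom.comp_apply, coe_eval₂Hom, eval₂_X, if_neg hs, map_zero]
          symm
          rw [Ideal.Quotient.eq_zero_iff_mem]
          rcases this with rfl | rfl <;> exact Ideal.subset_span (by simp)
    rw [← Ideal.Quotient.eq]
    exact (congrArg (fun q => q f) this).symm
  have hεm : ε m = 0 := by
    have h5 := congrArg ε hm
    rw [hl] at h5
    have ej : ε (X j) = 0 := by simp [ε, hjt]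
    have ek : ε (X k) = 0 := by simp [ε, hkt]
    have et : ε (X t) = X t := by simp [ε]
    have eC : ∀ c, ε (C c) = C c := by intro c; simp [ε]
    simp only [map_sub, map_add, map_mul, ej, ek, et, eC] at h5
    have h6 : (C (a t) * X t : MvPolynomial (Fin 3) A) * ε m = 0 := by linear_combination -h5
    rcases mul_eq_zero.1 h6 with h7 | h7
    · rcases mul_eq_zero.1 h7 with h8 | h8
      · exact absurd (C_eq_zero.1 h8) (h0 t)
      · exact absurd h8 (X_ne_zero t)
    · exact h7
  have hmm := hε m
  rw [hεm, sub_zero, Ideal.mem_span_pair] at hmm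
  obtain ⟨u, w, huw⟩ := hmm
  have hd : (X j : MvPolynomial (Fin 3) A) ∣ X k * (g - C (a k) * m - C (a t) * X t * w) := by
    refine ⟨h + C (a j) * m + C (a t) * X t * u, ?_⟩
    rw [hl] at hm
    linear_combination hm - C (a t) * X t * huw
  rcases (X_prime (i := j)).dvd_or_dvd hd with h8 | ⟨z, hz⟩
  · rw [X_dvd_X] at h8
    exact absurd h8 hjk
  · refine ⟨Ideal.Quotient.mk _ (z + C (a k) * u - C (a j) * w), ?_⟩
    rw [← map_mul, Ideal.Quotient.eq, Ideal.mem_span_singleton]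
    refine ⟨w, ?_⟩
    rw [hl]
    linear_combination hz - C (a k) * huw

lemma free_regPair {A : Type} [CommRing A] [IsDomain A] (j k : Fin 3) (hjk : j ≠ k) :
    RegPair (X j : MvPolynomial (Fin 3) A) (X k) := by
  intro y hy
  rcases (X_prime (i := j)).dvd_or_dvd hy with h | h
  · rw [X_dvd_X] at h
    exact absurd h hjk
  · exact h

/-- variables: p = X 0, q = X 1, v = X 2, w = X 3, r = X 4 -/
noncomputable def Qloc {A : Type} [CommRing A] (a b : A) : Ideal (MvPolynomial (Fin 5) A) :=
  Ideal.span {C a * X 2 + C b * X 3, X 0 * X 2 + X 1 * X 3, C a * X 1 - C b * X 0}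

lemma mem_Qloc {A : Type} [CommRing A] (a b : A) (f : MvPolynomial (Fin 5) A) :
    f ∈ Qloc a b ↔ ∃ h k m, f = (C a * X 2 + C b * X 3) * h + (X 0 * X 2 + X 1 * X 3) * k
      + (C a * X 1 - C b * X 0) * m := by
  unfold Qloc
  rw [Ideal.mem_span_insert]
  constructor
  · rintro ⟨h, z, hz, rfl⟩
    obtain ⟨k, m, rfl⟩ := Ideal.mem_span_pair.1 hz
    exact ⟨h, k, m, by ring⟩
  · rintro ⟨h, k, m, rfl⟩
    exact ⟨h, _, Ideal.mem_span_pair.2 ⟨k, m, rfl⟩, by ring⟩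

lemma Qloc_prime {A : Type} [CommRing A] [IsDomain A] (a b : A) (h0 : a ≠ 0)
    (hr : RegPair a b) : (Qloc a b).IsPrime := by
  have hc : (C a : MvPolynomial (Fin 5) A) ≠ 0 := by simpa using h0
  apply prime_of_away a h0 _ _ ![C a * X 0, C b * X 0, - (C b * X 3), C a * X 3, C a * X 4]
  · intro s
    rw [mem_Qloc]
    fin_cases s
    · exact ⟨0, 0, 0, by simp⟩
    · exact ⟨0, 0, 1, by simp⟩
    · exact ⟨1, 0, 0, by simp⟩
    · exact ⟨0, 0, 0, by simp⟩
    · exact ⟨0, 0, 0, by simp⟩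
  · intro L _ ι u hu f hf
    obtain ⟨h, k, m, rfl⟩ := (mem_Qloc a b f).1 hf
    have hu' : (C (ι a) : MvPolynomial (Fin 5) L) * C u = 1 := by rw [← C_mul, hu, C_1]
    simp only [map_add, map_sub, map_mul]
    simp only [coe_eval₂Hom, eval₂_C, eval₂_X, RingHom.comp_apply,
      map_neg, map_C, map_X, Matrix.cons_val, map_mul]
    ring
  · intro g hg
    obtain ⟨h, k, m, hE⟩ := (mem_Qloc a b _).1 hg
    have hk : k ∈ (Ideal.span {a, b}).map (C : A →+* MvPolynomial (Fin 5) A) := by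
      rw [mem_map_C_iff_map]
      set mm := Ideal.Quotient.mk (Ideal.span {a, b})
      have hma : mm a = 0 := Ideal.Quotient.eq_zero_iff_mem.2 (Ideal.subset_span (by simp))
      have hmb : mm b = 0 := Ideal.Quotient.eq_zero_iff_mem.2 (Ideal.subset_span (by simp))
      have h4 := congrArg (map mm) hE
      simp only [map_mul, map_add, map_sub, map_C, map_X, hma, hmb, C_0, zero_mul, zero_add,
        sub_zero, add_zero] at h4
      refine nzd_of_split (0 : Fin 5) (X 0 * X 2) (X 1 * X 3) ?_ ?_ ?_ _ h4.symm
      · intro x hx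
        rw [mul_assoc] at hx
        exact X_nzd _ _ (X_nzd _ _ hx)
      · simp; ring
      · simp
    rw [Ideal.map_span, Set.image_pair, Ideal.mem_span_pair] at hk
    obtain ⟨k1, k2, hk⟩ := hk
    have hd : (C a : MvPolynomial (Fin 5) A) ∣
        C b * (X 3 * h + (X 0 * X 2 + X 1 * X 3) * k2 - X 0 * m) := by
      refine ⟨g - X 2 * h - (X 0 * X 2 + X 1 * X 3) * k1 - X 1 * m, ?_⟩
      linear_combination -hE + (X 0 * X 2 + X 1 * X 3) * hk
    obtain ⟨e, he⟩ := C_dvd_C_mul a b hr _ hd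
    have hg1 : g = X 2 * h + (X 0 * X 2 + X 1 * X 3) * k1 + X 1 * m + C b * e := by
      apply mul_left_cancel₀ hc
      linear_combination hE - (X 0 * X 2 + X 1 * X 3) * hk + C b * he
    let ε : MvPolynomial (Fin 5) A →+* MvPolynomial (Fin 5) A :=
      eval₂Hom C (fun s => if s = 3 then 0 else X s)
    have hε : ∀ f, (X 3 : MvPolynomial (Fin 5) A) ∣ f - ε f := by
      intro f
      have : (Ideal.Quotient.mk (Ideal.span {(X 3 : MvPolynomial (Fin 5) A)})).comp ε =
          Ideal.Quotient.mk (Ideal.span {(X 3 : MvPolynomial (Fin 5) A)}) := by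
        apply MvPolynomial.ringHom_ext
        · intro c; simp [ε]
        · intro s
          by_cases hs : s = 3
          · subst hs
            simp only [ε, RingHom.comp_apply, coe_eval₂Hom, eval₂_X, if_true, map_zero]
            symm
            rw [Ideal.Quotient.eq_zero_iff_mem]
            exact Ideal.mem_span_singleton_self _
          · simp [ε, hs]
      rw [← Ideal.mem_span_singleton, ← Ideal.Quotient.eq]
      exact (congrArg (fun q => q f) this).symm
    have hd2 : C a ∣ ε (X 2 * k2 - m) := by
      apply C_dvd_X_mul a (0 : Fin 5)
      refine ⟨ε e, ?_⟩
      have h5 := congrArg ε he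
      have e0 : ε (X 0) = X 0 := by simp [ε]
      have e1 : ε (X 1) = X 1 := by simp [ε]
      have e2 : ε (X 2) = X 2 := by simp [ε]
      have e3 : ε (X 3) = 0 := by simp [ε]
      have eC : ∀ c, ε (C c) = C c := by intro c; simp [ε]
      simp only [map_sub, map_add, map_mul, e0, e1, e2, e3, eC] at h5 ⊢
      linear_combination h5
    obtain ⟨e1, he1⟩ := hd2
    obtain ⟨e2, he2⟩ := hε (X 2 * k2 - m)
    rw [he1] at he2
    have hd3 : C a ∣ h + X 1 * k2 + X 0 * e2 := by
      apply C_dvd_X_mul a (3 : Fin 5)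
      refine ⟨e - X 0 * e1, ?_⟩
      linear_combination he - X 0 * he2
    obtain ⟨e3, he3⟩ := hd3
    have he' : e = X 3 * e3 + X 0 * e1 := by
      apply mul_left_cancel₀ hc
      linear_combination -he + X 0 * he2 + X 3 * he3
    rw [mem_Qloc]
    refine ⟨e3, k1 - e2, -e1, ?_⟩
    rw [hg1, he']
    linear_combination X 2 * he3 - X 1 * he2

lemma Qloc_notMem {A : Type} [CommRing A] [IsDomain A] (a b : A) (ha : a ≠ 0) (hb : b ≠ 0) :
    X 0 ∉ Qloc a b ∧ X 1 ∉ Qloc a b ∧ X 4 ∉ Qloc a b := by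
  have key : ∀ f ∈ Qloc a b, eval (![a, b, 0, 0, 1] : Fin 5 → A) f = 0 := by
    intro f hf
    obtain ⟨h, k, m, rfl⟩ := (mem_Qloc a b f).1 hf
    simp; left; ring
  refine ⟨fun h => ?_, fun h => ?_, fun h => ?_⟩
  · exact ha (by simpa using key _ h)
  · exact hb (by simpa using key _ h)
  · simpa using key _ h

lemma Qloc_regPair {A : Type} [CommRing A] [IsDomain A] (a b : A) (ha : a ≠ 0) (hb : b ≠ 0)
    (hr : RegPair a b) :
    RegPair (Ideal.Quotient.mk (Qloc a b) (X 4)) (Ideal.Quotient.mk (Qloc a b) (X 0)) := by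
  intro y hy
  obtain ⟨g, rfl⟩ := Ideal.Quotient.mk_surjective y
  obtain ⟨h, hh⟩ := hy
  obtain ⟨h, rfl⟩ := Ideal.Quotient.mk_surjective h
  rw [← map_mul, ← map_mul, Ideal.Quotient.eq] at hh
  let ε : MvPolynomial (Fin 5) A →+* MvPolynomial (Fin 5) A :=
    eval₂Hom C (fun s => if s = 4 then 0 else X s)
  have hε : ∀ f, (X 4 : MvPolynomial (Fin 5) A) ∣ f - ε f := by
    intro f
    have : (Ideal.Quotient.mk (Ideal.span {(X 4 : MvPolynomial (Fin 5) A)})).comp ε =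
        Ideal.Quotient.mk (Ideal.span {(X 4 : MvPolynomial (Fin 5) A)}) := by
      apply MvPolynomial.ringHom_ext
      · intro c; simp [ε]
      · intro s
        by_cases hs : s = 4
        · subst hs
          simp only [ε, RingHom.comp_apply, coe_eval₂Hom, eval₂_X, if_true, map_zero]
          symm
          rw [Ideal.Quotient.eq_zero_iff_mem]
          exact Ideal.mem_span_singleton_self _
        · simp [ε, hs]
    rw [← Ideal.mem_span_singleton, ← Ideal.Quotient.eq]
    exact (congrArg (fun q => q f) this).symm
  have e0 : ε (X 0) = X 0 := by simp [ε]
  have e1 : ε (X 1) = X 1 := by simp [ε]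
  have e2 : ε (X 2) = X 2 := by simp [ε]
  have e3 : ε (X 3) = X 3 := by simp [ε]
  have e4 : ε (X 4) = 0 := by simp [ε]
  have eC : ∀ c, ε (C c) = C c := by intro c; simp [ε]
  have hεI : ∀ f ∈ Qloc a b, ε f ∈ Qloc a b := by
    intro f hf
    obtain ⟨h, k, m, rfl⟩ := (mem_Qloc a b f).1 hf
    rw [mem_Qloc]
    exact ⟨ε h, ε k, ε m, by simp only [map_sub, map_add, map_mul, e0, e1, e2, e3, eC]⟩
  have h5 := hεI _ hh
  simp only [map_sub, map_mul, e0, e4, zero_mul, sub_zero] at h5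
  have h6 : ε g ∈ Qloc a b := ((Qloc_prime a b ha hr).mem_or_mem h5).resolve_left
    (Qloc_notMem a b ha hb).1
  obtain ⟨z, hz⟩ := hε g
  refine ⟨Ideal.Quotient.mk _ z, ?_⟩
  rw [← map_mul, Ideal.Quotient.eq, ← hz]
  simpa using h6

end Algebra

section Models

def StrongGood (T : Type) [CommRing T] (y : Fin 3 → T) : Prop :=
  (∀ c, y c ≠ 0) ∧ ∀ j k, j ≠ k → RegPair (y j) (y k)

def WeakGood (T : Type) [CommRing T] (y : Fin 3 → T) : Prop :=
  (∀ c, y c ≠ 0) ∧ ∃ j k, j ≠ k ∧ RegPair (y j) (y k)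

lemma StrongGood.weak {T : Type} [CommRing T] {y : Fin 3 → T} (h : StrongGood T y) :
    WeakGood T y := ⟨h.1, 0, 1, by decide, h.2 0 1 (by decide)⟩

/-- the relations `F_i` among the first `m` vectors -/
def RelF (i m : ℕ) (T : Type) [CommRing T] (z : ℕ → Fin 3 → T) : Prop :=
  ∀ a, 1 ≤ a → a + 1 ≤ m → a ≠ i - 1 → a ≠ i → ∑ c, z a c * z (a + 1) c = 0

/-- a domain (weakly) representing the relations -/
def HasModel (K : Type) [Field K] (i m : ℕ)
    (E : ∀ (T : Type) [CommRing T], (ℕ → Fin 3 → T) → Prop)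
    (G : ∀ (T : Type) [CommRing T], (Fin 3 → T) → Prop) : Prop :=
  ∃ (B : Type) (_ : CommRing B) (_ : IsDomain B) (_ : Algebra K B) (y : ℕ → Fin 3 → B),
    E B y ∧ RelF i m B y ∧ G B (y m) ∧
    ∀ (T : Type) [CommRing T] [Algebra K T] (z : ℕ → Fin 3 → T), E T z → RelF i m T z →
      ∃ ψ : B →ₐ[K] T, ∀ j, 1 ≤ j → j ≤ m → ∀ c, ψ (y j c) = z j c

lemma HasModel.weak {K : Type} [Field K] {i m : ℕ}
    {E : ∀ (T : Type) [CommRing T], (ℕ → Fin 3 → T) → Prop}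
    (h : HasModel K i m E StrongGood) : HasModel K i m E WeakGood := by
  obtain ⟨B, _, _, _, y, h1, h2, h3, h4⟩ := h
  exact ⟨B, _, inferInstance, _, y, h1, h2, h3.weak, h4⟩

lemma lift_exists {K σ B T : Type} [Field K] [CommRing B] [Algebra K B] [CommRing T] [Algebra K T]
    (ψ : B →ₐ[K] T) (v : σ → T) :
    ∃ ψ' : MvPolynomial σ B →ₐ[K] T, (∀ b, ψ' (C b) = ψ b) ∧ (∀ s, ψ' (X s) = v s) :=
  ⟨{ eval₂Hom (ψ : B →+* T) v with
      commutes' := by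
        intro r
        have : algebraMap K (MvPolynomial σ B) r = C (algebraMap K B r) := rfl
        rw [this]
        simp }, by intro b; simp, by intro s; simp⟩

lemma lift_quot_exists {K σ B T : Type} [Field K] [CommRing B] [Algebra K B] [CommRing T]
    [Algebra K T] (ψ : B →ₐ[K] T) (v : σ → T) (I : Ideal (MvPolynomial σ B))
    (hI : ∀ ψ' : MvPolynomial σ B →ₐ[K] T, (∀ b, ψ' (C b) = ψ b) → (∀ s, ψ' (X s) = v s) →
      ∀ f ∈ I, ψ' f = 0) :
    ∃ ψ' : (MvPolynomial σ B ⧸ I) →ₐ[K] T, (∀ b, ψ' (Ideal.Quotient.mk I (C b)) = ψ b) ∧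
      (∀ s, ψ' (Ideal.Quotient.mk I (X s)) = v s) := by
  obtain ⟨ψ', h1, h2⟩ := lift_exists ψ v
  refine ⟨Ideal.Quotient.liftₐ I ψ' (hI ψ' h1 h2), ?_, ?_⟩
  · intro b; rw [← h1]; rfl
  · intro s; rw [← h2]; rfl

/-- the extra relations `E` only depend on the first `m` vectors, and are preserved by homs -/
def Stable (m : ℕ) (E : ∀ (T : Type) [CommRing T], (ℕ → Fin 3 → T) → Prop) : Prop :=
  ∀ (T T' : Type) [CommRing T] [CommRing T'] (f : T →+* T') (z : ℕ → Fin 3 → T)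
    (z' : ℕ → Fin 3 → T'), (∀ j, 1 ≤ j → j ≤ m → ∀ c, z' j c = f (z j c)) → E T z → E T' z'

lemma stable_RelF (i m : ℕ) : Stable m (RelF i m) := by
  intro T T' _ _ f z z' h hz a h1 h2 h3 h4
  have := congrArg f (hz a h1 h2 h3 h4)
  rw [map_sum, map_zero] at this
  rw [← this]
  refine Finset.sum_congr rfl fun c _ => ?_
  rw [map_mul, h a h1 (by omega), h (a + 1) (by omega) h2]

lemma HasModel.ext {K : Type} [Field K] {i m : ℕ}
    {E : ∀ (T : Type) [CommRing T], (ℕ → Fin 3 → T) → Prop} (hm : 1 ≤ m) (h1 : m ≠ i - 1)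
    (h2 : m ≠ i) (hE : Stable m E) (h : HasModel K i m E WeakGood) :
    HasModel K i (m + 1) E StrongGood := by
  obtain ⟨B, _, _, _, y, hEy, hR, ⟨h0, j, k, hjk, hreg⟩, hU⟩ := h
  let I : Ideal (MvPolynomial (Fin 3) B) := Ideal.span {lform (y m)}
  have hI : I.IsPrime := lform_prime (y m) j k hjk (h0 j) hreg
  let y' : ℕ → Fin 3 → MvPolynomial (Fin 3) B ⧸ I := fun j c =>
    if j = m + 1 then Ideal.Quotient.mk I (X c) else Ideal.Quotient.mk I (C (y j c))
  have hy1 : ∀ c, y' (m + 1) c = Ideal.Quotient.mk I (X c) := by intro c; simp [y']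
  have hy2 : ∀ j, j ≤ m → ∀ c, y' j c = Ideal.Quotient.mk I (C (y j c)) := by
    intro j hj c; simp [y', show j ≠ m + 1 by omega]
  have hy3 : ∀ j, 1 ≤ j → j ≤ m → ∀ c, y' j c = ((Ideal.Quotient.mk I).comp C) (y j c) :=
    fun j _ hj c => hy2 j hj c
  refine ⟨MvPolynomial (Fin 3) B ⧸ I, inferInstance, Ideal.Quotient.isDomain I, inferInstance, y',
    hE _ _ ((Ideal.Quotient.mk I).comp C) y y' hy3 hEy, ?_, ⟨?_, ?_⟩, ?_⟩
  · intro a ha1 ha2 ha3 ha4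
    by_cases ham : a = m
    · subst ham
      simp only [hy1, hy2 a le_rfl]
      rw [← Ideal.Quotient.eq_zero_iff_mem.2
        (show lform (y a) ∈ I from Ideal.mem_span_singleton_self _)]
      simp [lform]
    · exact stable_RelF i m _ _ ((Ideal.Quotient.mk I).comp C) y y' hy3 hR a ha1 (by omega) ha3 ha4
  · intro c hc
    rw [hy1, Ideal.Quotient.eq_zero_iff_mem] at hc
    exact lform_X_notMem (y m) h0 c hc
  · intro j k hjk
    rw [hy1, hy1]
    exact lform_regPair (y m) h0 j k hjk
  · intro T _ _ z hz hRz
    obtain ⟨ψ, hψ⟩ := hU T z hz (fun a h1 h2 => hRz a h1 (by omega))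
    obtain ⟨ψ', h3, h4⟩ := lift_quot_exists ψ (z (m + 1)) I (by
      intro ψ' hC hX f hf
      obtain ⟨g, rfl⟩ := Ideal.mem_span_singleton.1 hf
      rw [map_mul]
      have : ψ' (lform (y m)) = 0 := by
        rw [← hRz m hm le_rfl h1 h2]
        simp [lform, hC, hX, hψ m hm le_rfl]
      rw [this, zero_mul])
    refine ⟨ψ', fun j hj1 hj2 c => ?_⟩
    by_cases hj : j = m + 1
    · subst hj; rw [hy1, h4]
    · rw [hy2 j (by omega), h3, hψ j hj1 (by omega)]

def ETrue (T : Type) [CommRing T] (_ : ℕ → Fin 3 → T) : Prop := True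

def EP (i : ℕ) (T : Type) [CommRing T] (z : ℕ → Fin 3 → T) : Prop := ∀ c, z i c = 0

def EQ (i : ℕ) (k kh : Fin 3) (T : Type) [CommRing T] (z : ℕ → Fin 3 → T) : Prop :=
  z (i - 1) 0 * z i 0 + z (i - 1) k * z i k = 0 ∧
  z (i + 1) 0 * z i 0 + z (i + 1) k * z i k = 0 ∧
  z (i - 1) 0 * z (i + 1) k - z (i - 1) k * z (i + 1) 0 = 0 ∧
  z i kh = 0

lemma stable_ETrue (m : ℕ) : Stable m ETrue := fun _ _ _ _ _ _ _ _ _ => trivial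

lemma stable_EP (i m : ℕ) (hi : 1 ≤ i) (him : i ≤ m) : Stable m (EP i) := by
  intro T T' _ _ f z z' h hz c
  rw [h i hi him, hz c, map_zero]

lemma stable_EQ (i m : ℕ) (k kh : Fin 3) (hi : 2 ≤ i) (him : i + 1 ≤ m) :
    Stable m (EQ i k kh) := by
  intro T T' _ _ f z z' h ⟨h1, h2, h3, h4⟩
  have ha := h (i - 1) (by omega) (by omega)
  have hb := h i (by omega) (by omega)
  have hc := h (i + 1) (by omega) (by omega)
  refine ⟨?_, ?_, ?_, ?_⟩
  · rw [ha, hb, ha, hb, ← map_mul, ← map_mul, ← map_add, h1, map_zero]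
  · rw [hc, hb, hc, hb, ← map_mul, ← map_mul, ← map_add, h2, map_zero]
  · rw [ha, hc, ha, hc, ← map_mul, ← map_mul, ← map_sub, h3, map_zero]
  · rw [hb, h4, map_zero]

lemma base_model (K : Type) [Field K] (i : ℕ) : HasModel K i 1 ETrue StrongGood := by
  refine ⟨MvPolynomial (Fin 3) K, inferInstance, inferInstance, inferInstance, fun _ c => X c,
    trivial, ?_, ⟨fun c => X_ne_zero c, fun j k hjk => free_regPair j k hjk⟩, ?_⟩
  · intro a h1 h2; omega
  · intro T _ _ z _ _
    refine ⟨aeval (z 1), fun j h1 h2 c => ?_⟩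
    obtain rfl : j = 1 := by omega
    simp

lemma left_model (K : Type) [Field K] (i m : ℕ) (hm : 1 ≤ m) (hmi : m + 1 ≤ i) :
    HasModel K i m ETrue StrongGood := by
  induction m, hm using Nat.le_induction with
  | base => exact base_model K i
  | succ m hm ih =>
    exact HasModel.ext hm (by omega) (by omega) (stable_ETrue m) (ih (by omega)).weak

lemma right_model (K : Type) [Field K] (i m : ℕ) (hm : i + 1 ≤ m)
    (E : ∀ (T : Type) [CommRing T], (ℕ → Fin 3 → T) → Prop) (hE : ∀ m, i + 1 ≤ m → Stable m E)
    (h : HasModel K i (i + 1) E WeakGood) : HasModel K i m E WeakGood := by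
  induction m, hm using Nat.le_induction with
  | base => exact h
  | succ m hm ih => exact (HasModel.ext (by omega) (by omega) (by omega) (hE m hm) ih).weak

lemma P_step (K : Type) [Field K] (m : ℕ) (h : HasModel K (m + 1) m ETrue StrongGood) :
    HasModel K (m + 1) (m + 2) (EP (m + 1)) WeakGood := by
  obtain ⟨B, _, _, _, y, -, hR, -, hU⟩ := h
  let y' : ℕ → Fin 3 → MvPolynomial (Fin 3) B := fun j c =>
    if j = m + 1 then 0 else if j = m + 2 then X c else C (y j c)
  have hy0 : ∀ c, y' (m + 1) c = 0 := by intro c; simp [y']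
  have hy1 : ∀ c, y' (m + 2) c = X c := by intro c; simp [y']
  have hy2 : ∀ j, j ≤ m → ∀ c, y' j c = C (y j c) := by
    intro j hj c; simp [y', show j ≠ m + 1 by omega, show j ≠ m + 2 by omega]
  refine ⟨MvPolynomial (Fin 3) B, inferInstance, inferInstance, inferInstance, y', hy0, ?_,
    ⟨?_, 0, 1, by decide, ?_⟩, ?_⟩
  · intro a ha1 ha2 ha3 ha4
    exact stable_RelF (m + 1) m _ _ C y y' (fun j _ hj c => hy2 j hj c) hR a ha1 (by omega) ha3 ha4
  · intro c; rw [hy1]; exact X_ne_zero c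
  · rw [hy1, hy1]; exact free_regPair 0 1 (by decide)
  · intro T _ _ z hz hRz
    obtain ⟨ψ, hψ⟩ := hU T z trivial (fun a h1 h2 => hRz a h1 (by omega))
    obtain ⟨ψ', h3, h4⟩ := lift_exists ψ (z (m + 2))
    refine ⟨ψ', fun j hj1 hj2 c => ?_⟩
    by_cases hj : j = m + 2
    · subst hj; rw [hy1, h4]
    · by_cases hj' : j = m + 1
      · subst hj'; rw [hy0, map_zero, hz c]
      · rw [hy2 j (by omega), h3, hψ j hj1 (by omega)]

lemma Q_step (K : Type) [Field K] (m : ℕ) (hm : 1 ≤ m) (k kh : Fin 3) (hk : k ≠ 0) (hkh : kh ≠ 0)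
    (hkk : k ≠ kh) (h : HasModel K (m + 1) m ETrue StrongGood) :
    HasModel K (m + 1) (m + 2) (EQ (m + 1) k kh) WeakGood := by
  obtain ⟨B, _, _, _, y, -, hR, ⟨h0, hreg⟩, hU⟩ := h
  have hcases : ∀ c, c = 0 ∨ c = k ∨ c = kh := by
    intro c; revert c k kh; decide
  let I := Qloc (y m 0) (y m k)
  have hI : I.IsPrime := Qloc_prime _ _ (h0 0) (hreg 0 k hk.symm)
  let q := Ideal.Quotient.mk I
  let y' : ℕ → Fin 3 → MvPolynomial (Fin 5) B ⧸ I := fun j c =>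
    if j = m + 1 then (if c = 0 then q (X 2) else if c = k then q (X 3) else 0)
    else if j = m + 2 then (if c = 0 then q (X 0) else if c = k then q (X 1) else q (X 4))
    else q (C (y j c))
  have v0 : y' (m + 1) 0 = q (X 2) := by simp [y']
  have vk : y' (m + 1) k = q (X 3) := by simp [y', hk]
  have vh : y' (m + 1) kh = 0 := by simp [y', hkh, hkk.symm]
  have p0 : y' (m + 2) 0 = q (X 0) := by simp [y']
  have pk : y' (m + 2) k = q (X 1) := by simp [y', hk]
  have ph : y' (m + 2) kh = q (X 4) := by simp [y', hkh, hkk.symm]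
  have hy2 : ∀ j, j ≤ m → ∀ c, y' j c = q (C (y j c)) := by
    intro j hj c; simp [y', show j ≠ m + 1 by omega, show j ≠ m + 2 by omega]
  have hnm := Qloc_notMem (y m 0) (y m k) (h0 0) (h0 k)
  refine ⟨MvPolynomial (Fin 5) B ⧸ I, inferInstance, Ideal.Quotient.isDomain I, inferInstance, y',
    ⟨?_, ?_, ?_, vh⟩, ?_, ⟨?_, kh, 0, hkh, ?_⟩, ?_⟩
  · rw [Nat.add_sub_cancel, v0, vk, hy2 m le_rfl, hy2 m le_rfl, ← map_mul, ← map_mul, ← map_add]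
    exact Ideal.Quotient.eq_zero_iff_mem.2 (Ideal.subset_span (by simp))
  · rw [v0, vk, p0, pk, ← map_mul, ← map_mul, ← map_add]
    exact Ideal.Quotient.eq_zero_iff_mem.2 (Ideal.subset_span (by simp))
  · rw [Nat.add_sub_cancel, p0, pk, hy2 m le_rfl, hy2 m le_rfl, ← map_mul, ← map_mul, ← map_sub]
    exact Ideal.Quotient.eq_zero_iff_mem.2 (Ideal.subset_span (by simp))
  · intro a ha1 ha2 ha3 ha4
    exact stable_RelF (m + 1) m _ _ (q.comp C) y y' (fun j _ hj c => hy2 j hj c) hR a ha1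
      (by omega) ha3 ha4
  · intro c hc
    rcases hcases c with rfl | rfl | rfl
    · rw [p0] at hc; exact hnm.1 (Ideal.Quotient.eq_zero_iff_mem.1 hc)
    · rw [pk] at hc; exact hnm.2.1 (Ideal.Quotient.eq_zero_iff_mem.1 hc)
    · rw [ph] at hc; exact hnm.2.2 (Ideal.Quotient.eq_zero_iff_mem.1 hc)
  · rw [ph, p0]; exact Qloc_regPair _ _ (h0 0) (h0 k) (hreg 0 k hk.symm)
  · intro T _ _ z ⟨z1, z2, z3, z4⟩ hRz
    rw [Nat.add_sub_cancel] at z1 z3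
    obtain ⟨ψ, hψ⟩ := hU T z trivial (fun a h1 h2 => hRz a h1 (by omega))
    have hψm := hψ m hm le_rfl
    obtain ⟨ψ', h3, h4⟩ := lift_quot_exists ψ
      ![z (m + 2) 0, z (m + 2) k, z (m + 1) 0, z (m + 1) k, z (m + 2) kh] I (by
      intro ψ' hC hX f hf
      obtain ⟨h, k', m', rfl⟩ := (mem_Qloc _ _ _).1 hf
      simp only [map_add, map_mul, map_sub, hC, hX, hψm, Matrix.cons_val]
      linear_combination (ψ' h) * z1 + (ψ' k') * z2 + (ψ' m') * z3)
    refine ⟨ψ', fun j hj1 hj2 c => ?_⟩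
    by_cases hj : j = m + 2
    · subst hj
      rcases hcases c with rfl | rfl | rfl
      · rw [p0]; exact h4 0
      · rw [pk]; exact h4 1
      · rw [ph]; exact h4 4
    · by_cases hj' : j = m + 1
      · subst hj'
        rcases hcases c with rfl | rfl | rfl
        · rw [v0]; exact h4 2
        · rw [vk]; exact h4 3
        · rw [vh, z4, map_zero]
      · rw [hy2 j (by omega)]
        exact (h3 _).trans (hψ j hj1 (by omega) c)

lemma yvar_eq (K : Type) [Field K] (n : ℕ) (x : Fin n × Fin 3) :
    yvar K n (x.1.1 + 1) (x.2.1 + 1) = X x := by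
  have h1 := x.1.2
  have h2 := x.2.2
  unfold yvar
  rw [dif_pos ⟨by omega, by omega, by omega, by omega⟩]
  simp

lemma aeval_yvar {K : Type} [Field K] {n : ℕ} {T : Type} [CommRing T] [Algebra K T]
    (y : ℕ → Fin 3 → T) (j : ℕ) (h1 : 1 ≤ j) (h2 : j ≤ n) (c : Fin 3) :
    aeval (R := K) (fun x : Fin n × Fin 3 => y (x.1.1 + 1) x.2) (yvar K n j (c.1 + 1)) = y j c := by
  have := yvar_eq K n (⟨j - 1, by omega⟩, c)
  simp only [Nat.sub_add_cancel h1] at this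
  rw [this, aeval_X]
  simp only [Nat.sub_add_cancel h1]

lemma prime_of_model {K : Type} [Field K] {i n : ℕ}
    {E : ∀ (T : Type) [CommRing T], (ℕ → Fin 3 → T) → Prop}
    {G : ∀ (T : Type) [CommRing T], (Fin 3 → T) → Prop} (h : HasModel K i n E G)
    (I : Ideal (MvPolynomial (Fin n × Fin 3) K))
    (hI1 : ∀ (T : Type) [CommRing T] [Algebra K T] (y : ℕ → Fin 3 → T), E T y → RelF i n T y →
      ∀ f ∈ I, aeval (fun x : Fin n × Fin 3 => y (x.1.1 + 1) x.2) f = 0)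
    (hI2 : E (MvPolynomial (Fin n × Fin 3) K ⧸ I)
      (fun j c => Ideal.Quotient.mk I (yvar K n j (c.1 + 1))))
    (hI3 : RelF i n (MvPolynomial (Fin n × Fin 3) K ⧸ I)
      (fun j c => Ideal.Quotient.mk I (yvar K n j (c.1 + 1)))) : I.IsPrime := by
  obtain ⟨B, _, _, _, y, hE, hR, -, hU⟩ := h
  obtain ⟨ψ, hψ⟩ := hU _ _ hI2 hI3
  let φ : MvPolynomial (Fin n × Fin 3) K →ₐ[K] B :=
    aeval (fun x : Fin n × Fin 3 => y (x.1.1 + 1) x.2)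
  have hψφ : ψ.comp φ = Ideal.Quotient.mkₐ K I := by
    apply MvPolynomial.algHom_ext
    intro x
    have h1 := x.1.2
    simp only [AlgHom.comp_apply, φ, aeval_X]
    rw [hψ _ (by omega) (by omega), yvar_eq]
    rfl
  have hker : I = RingHom.ker (φ : MvPolynomial (Fin n × Fin 3) K →+* B) := by
    apply le_antisymm
    · intro f hf
      exact hI1 B y hE hR f hf
    · intro f hf
      have h5 := congrArg (fun g => g f) hψφ
      have h6 : φ f = 0 := hf
      simp only [AlgHom.comp_apply, h6, map_zero] at h5
      exact Ideal.Quotient.eq_zero_iff_mem.1 h5.symm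
  rw [hker]
  exact RingHom.ker_isPrime _

lemma aeval_except {K : Type} [Field K] {i n : ℕ} (T : Type) [CommRing T] [Algebra K T]
    (y : ℕ → Fin 3 → T) (hR : RelF i n T y) :
    exceptIdeal K n i ≤ RingHom.ker
      (aeval (R := K) (fun x : Fin n × Fin 3 => y (x.1.1 + 1) x.2)) := by
  unfold exceptIdeal
  rw [Ideal.span_le]
  rintro g ⟨a, h1, h2, h3, h4, rfl⟩
  rw [SetLike.mem_coe, RingHom.mem_ker, pathGen, map_sum, ← hR a h1 h2 h3 h4]
  refine Finset.sum_congr rfl fun c _ => ?_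
  rw [map_mul, aeval_yvar y a h1 (by omega), aeval_yvar y (a + 1) (by omega) h2]

lemma RelF_quot {K : Type} [Field K] {i n : ℕ} (I : Ideal (MvPolynomial (Fin n × Fin 3) K))
    (hI : exceptIdeal K n i ≤ I) : RelF i n (MvPolynomial (Fin n × Fin 3) K ⧸ I)
      (fun j c => Ideal.Quotient.mk I (yvar K n j (c.1 + 1))) := by
  intro a h1 h2 h3 h4
  have : pathGen K n a ∈ I := hI (Ideal.subset_span ⟨a, h1, h2, h3, h4, rfl⟩)
  rw [← Ideal.Quotient.eq_zero_iff_mem.2 this, pathGen, map_sum]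
  simp only [map_mul]

lemma P_prime (K : Type) [Field K] (n i : ℕ) (hi : 2 ≤ i) (hin : i + 1 ≤ n) :
    (Pideal K n i).IsPrime := by
  obtain ⟨m, rfl⟩ : ∃ m, i = m + 1 := ⟨i - 1, by omega⟩
  have M := right_model K (m + 1) n hin (EP (m + 1))
    (fun m' hm' => stable_EP _ _ (by omega) (by omega))
    (P_step K m (left_model K (m + 1) m (by omega) le_rfl))
  refine prime_of_model M _ ?_ ?_ (RelF_quot _ le_sup_right)
  · intro T _ _ y hE hR f hf
    have : Pideal K n (m + 1) ≤ RingHom.ker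
        (aeval (R := K) (fun x : Fin n × Fin 3 => y (x.1.1 + 1) x.2)) := by
      refine sup_le ?_ (aeval_except T y hR)
      rw [Ideal.span_le]
      have key := fun c => (aeval_yvar (K := K) (n := n) y (m + 1) (by omega) (by omega) c).trans
        (hE c)
      rintro g (rfl | rfl | rfl)
      · exact key 0
      · exact key 1
      · exact key 2
    exact this hf
  · intro c
    apply Ideal.Quotient.eq_zero_iff_mem.2
    apply Ideal.mem_sup_left
    apply Ideal.subset_span
    fin_cases c <;> simp

lemma Q_prime (K : Type) [Field K] (n i : ℕ) (hi : 2 ≤ i) (hin : i + 1 ≤ n) :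
    (Qideal K n i).IsPrime := by
  obtain ⟨k, kh, hk, hkh, hkk, e1, e2⟩ : ∃ k kh : Fin 3, k ≠ 0 ∧ kh ≠ 0 ∧ k ≠ kh ∧
      kcol i = k.1 + 1 ∧ khat i = kh.1 + 1 := by
    unfold kcol khat
    by_cases h : Even i
    · exact ⟨1, 2, by decide, by decide, by decide, by simp [h], by simp [h]⟩
    · exact ⟨2, 1, by decide, by decide, by decide, by simp [h], by simp [h]⟩
  have M0 : HasModel K i (i + 1) (EQ i k kh) WeakGood := by
    obtain ⟨m, rfl⟩ : ∃ m, i = m + 1 := ⟨i - 1, by omega⟩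
    exact Q_step K m (by omega) k kh hk hkh hkk (left_model K (m + 1) m (by omega) le_rfl)
  have M := right_model K i n hin (EQ i k kh) (fun m' hm' => stable_EQ _ _ _ _ hi hm') M0
  refine prime_of_model M _ ?_ ?_ (RelF_quot _ le_sup_right)
  · intro T _ _ y ⟨z1, z2, z3, z4⟩ hR f hf
    have : Qideal K n i ≤ RingHom.ker
        (aeval (R := K) (fun x : Fin n × Fin 3 => y (x.1.1 + 1) x.2)) := by
      refine sup_le ?_ (aeval_except T y hR)
      rw [Ideal.span_le, e1, e2]
      have ka := fun c => aeval_yvar (K := K) (n := n) y (i - 1) (by omega) (by omega) c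
      have kb := fun c => aeval_yvar (K := K) (n := n) y i (by omega) (by omega) c
      have kc := fun c => aeval_yvar (K := K) (n := n) y (i + 1) (by omega) (by omega) c
      have ka0 := ka 0
      have kb0 := kb 0
      have kc0 := kc 0
      simp only [Fin.val_zero, zero_add] at ka0 kb0 kc0
      rintro g (rfl | rfl | rfl | rfl)
      · rw [SetLike.mem_coe, RingHom.mem_ker, map_add, map_mul, map_mul, ka0, kb0, ka, kb, z1]
      · rw [SetLike.mem_coe, RingHom.mem_ker, map_add, map_mul, map_mul, kc0, kb0, kc, kb, z2]
      · rw [SetLike.mem_coe, RingHom.mem_ker, map_sub, map_mul, map_mul, ka0, kc0, ka, kc, z3]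
      · rw [SetLike.mem_coe, RingHom.mem_ker, kb, z4]
    exact this hf
  · have key : ∀ g, g ∈ ({yvar K n (i - 1) 1 * yvar K n i 1
          + yvar K n (i - 1) (kcol i) * yvar K n i (kcol i),
        yvar K n (i + 1) 1 * yvar K n i 1 + yvar K n (i + 1) (kcol i) * yvar K n i (kcol i),
        yvar K n (i - 1) 1 * yvar K n (i + 1) (kcol i) -
          yvar K n (i - 1) (kcol i) * yvar K n (i + 1) 1,
        yvar K n i (khat i)} : Set (MvPolynomial (Fin n × Fin 3) K)) →
        Ideal.Quotient.mk (Qideal K n i) g = 0 := fun g hg =>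
      Ideal.Quotient.eq_zero_iff_mem.2 (Ideal.mem_sup_left (Ideal.subset_span hg))
    rw [e1, e2] at key
    refine ⟨?_, ?_, ?_, ?_⟩
    · simp only [← map_mul, ← map_add]
      exact key _ (by simp)
    · simp only [← map_mul, ← map_add]
      exact key _ (by simp)
    · simp only [← map_mul, ← map_sub]
      exact key _ (by simp)
    · exact key _ (by simp)

end Models

/-- For the `n`-path graph with `n ≥ 3` and `d = 3`, the ideals `P_i` and `Q_i`
(`i = 2, …, n-1`) are prime ideals of `S`. -/
theorem path_P_Q_isPrime (K : Type) [Field K] (n : ℕ) (hn : 3 ≤ n) :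
    ∀ i : ℕ, 2 ≤ i → i + 1 ≤ n → (Pideal K n i).IsPrime ∧ (Qideal K n i).IsPrime := by
  intro i hi hin
  exact ⟨P_prime K n i hi hin, Q_prime K n i hi hin⟩
end

section
/- Let G be the n-path graph with n ≥ 3 and d = 3. For each i = 2, …, n−1, the images of the ideals P_i and Q_i in R_G(3) have height 1; equivalently, P_i and Q_i have height n in S. -/
open MvPolynomial

/-- The height of an ideal: the infimum of the heights of the primes containing it. -/
noncomputable def idealHeight {R : Type*} [CommRing R] (I : Ideal R) : ℕ∞ :=
  ⨅ p : {p : PrimeSpectrum R // I ≤ p.asIdeal}, Order.height p.1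


section general
variable {σ K : Type} [Field K]

open Classical in
/-- keep the variables outside `B` free, evaluate those in `B` at the generic point of `p` -/
noncomputable def phiB (p : Ideal (MvPolynomial σ K)) (B : Set σ) :
    MvPolynomial σ K →ₐ[K] MvPolynomial σ (MvPolynomial σ K ⧸ p) :=
  aeval (fun s => if s ∈ B then C (Ideal.Quotient.mk p (X s)) else X s)

open Classical in
noncomputable def psiB (p : Ideal (MvPolynomial σ K)) (B : Set σ) :
    MvPolynomial σ (MvPolynomial σ K ⧸ p) →ₐ[MvPolynomial σ K ⧸ p]
      MvPolynomial σ (MvPolynomial σ K ⧸ p) :=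
  aeval (fun s => if s ∈ B then C (Ideal.Quotient.mk p (X s)) else X s)

/-- the prime of relations among the variables in `B` -/
noncomputable def idB (p : Ideal (MvPolynomial σ K)) (B : Set σ) : Ideal (MvPolynomial σ K) :=
  RingHom.ker (phiB p B)

lemma phiB_X_mem (p : Ideal (MvPolynomial σ K)) {B : Set σ} {s : σ} (h : s ∈ B) :
    phiB p B (X s) = C (Ideal.Quotient.mk p (X s)) := by simp [phiB, h]

lemma phiB_X_not_mem (p : Ideal (MvPolynomial σ K)) {B : Set σ} {s : σ} (h : s ∉ B) :
    phiB p B (X s) = X s := by simp [phiB, h]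

lemma psiB_phiB (p : Ideal (MvPolynomial σ K)) {B B' : Set σ} (h : B ⊆ B')
    (x : MvPolynomial σ K) : psiB p B' (phiB p B x) = phiB p B' x := by
  have : ((psiB p B').restrictScalars K).comp (phiB p B) = phiB p B' := by
    apply MvPolynomial.algHom_ext
    intro s
    by_cases hs : s ∈ B
    · simp [phiB, psiB, hs, h hs]
    · by_cases hs' : s ∈ B' <;> simp [phiB, psiB, hs, hs']
  exact DFunLike.congr_fun this x

lemma idB_mono (p : Ideal (MvPolynomial σ K)) {B B' : Set σ} (h : B ⊆ B') :
    idB p B ≤ idB p B' := by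
  intro x hx
  rw [idB, RingHom.mem_ker] at *
  rw [← psiB_phiB p h, hx, map_zero]

lemma phiB_univ (p : Ideal (MvPolynomial σ K)) (x : MvPolynomial σ K) :
    phiB p Set.univ x = C (Ideal.Quotient.mk p x) := by
  have : phiB p Set.univ = (Algebra.ofId (MvPolynomial σ K ⧸ p) (MvPolynomial σ (MvPolynomial σ K ⧸ p))
     |>.restrictScalars K).comp (Ideal.Quotient.mkₐ K p) := by
    apply MvPolynomial.algHom_ext
    intro s
    simp [phiB, Algebra.ofId_apply, MvPolynomial.algebraMap_eq]
  rw [this]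
  simp [Algebra.ofId_apply, MvPolynomial.algebraMap_eq]

lemma idB_univ (p : Ideal (MvPolynomial σ K)) : idB p Set.univ = p := by
  ext x
  rw [idB, RingHom.mem_ker, phiB_univ, map_eq_zero_iff _ (C_injective _ _),
    Ideal.Quotient.eq_zero_iff_mem]

instance idB_prime (p : Ideal (MvPolynomial σ K)) [p.IsPrime] (B : Set σ) : (idB p B).IsPrime := by
  unfold idB
  exact RingHom.ker_isPrime _

lemma fix_mono (p : Ideal (MvPolynomial σ K)) {B B' : Set σ} (h : B ⊆ B') {a : MvPolynomial σ K}
    (ha : phiB p B a = C (Ideal.Quotient.mk p a)) : phiB p B' a = C (Ideal.Quotient.mk p a) := by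
  rw [← psiB_phiB p h, ha]
  simp [psiB, MvPolynomial.algebraMap_eq]

lemma ht_insert (p : Ideal (MvPolynomial σ K)) [p.IsPrime] {B : Set σ} {x : σ} (hx : x ∉ B)
    {a b : MvPolynomial σ K} (ha : phiB p B a = C (Ideal.Quotient.mk p a))
    (hb : phiB p B b = C (Ideal.Quotient.mk p b)) (hap : a ∉ p) (h : a * X x + b ∈ p) :
    (idB p B).height + 1 ≤ (idB p (insert x B)).height := by
  apply Ideal.height_add_one_le_of_lt_of_isPrime
  refine lt_of_le_of_ne (idB_mono p (Set.subset_insert x B)) ?_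
  intro heq
  have h1 : a * X x + b ∈ idB p (insert x B) := by
    rw [idB, RingHom.mem_ker, map_add, map_mul, fix_mono p (Set.subset_insert x B) ha,
      fix_mono p (Set.subset_insert x B) hb, phiB_X_mem p (Set.mem_insert x B),
      ← map_mul, ← map_mul, ← map_add, ← map_add, Ideal.Quotient.eq_zero_iff_mem.2 h, map_zero]
  rw [← heq, idB, RingHom.mem_ker, map_add, map_mul, ha, hb, phiB_X_not_mem p hx] at h1
  have hne : ¬ (0 : σ →₀ ℕ) = Finsupp.single x 1 := by
    intro h0
    have := DFunLike.congr_fun h0 x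
    simp at this
  have h2 := congrArg (coeff (Finsupp.single x 1)) h1
  classical
  rw [coeff_add, coeff_C_mul, coeff_X, coeff_C, coeff_zero, if_neg hne] at h2
  apply hap
  rw [← Ideal.Quotient.eq_zero_iff_mem]
  simpa using h2

lemma ht_insert_zero (p : Ideal (MvPolynomial σ K)) [hp : p.IsPrime] {B : Set σ} {x : σ}
    (hx : x ∉ B) (h : X x ∈ p) :
    (idB p B).height + 1 ≤ (idB p (insert x B)).height := by
  apply ht_insert p hx (a := 1) (b := 0) (by simp) (by simp) _ (by simpa using h)
  exact fun h1 => hp.ne_top ((Ideal.eq_top_iff_one p).2 h1)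

lemma ht_zero (p : Ideal (MvPolynomial σ K)) [hp : p.IsPrime] {B B' : Set σ} {b : Fin 3 → σ}
    (hb : Function.Injective b) (hB : ∀ k, b k ∉ B) (hB' : B ∪ Set.range b ⊆ B')
    (h : ∀ k, X (b k) ∈ p) :
    (idB p B).height + 3 ≤ (idB p B').height := by
  have h1 := ht_insert_zero p (hB 0) (h 0)
  have h2 := ht_insert_zero p (B := insert (b 0) B) (x := b 1)
    (by simp [hB, hb.eq_iff]) (h 1)
  have h3 := ht_insert_zero p (B := insert (b 1) (insert (b 0) B)) (x := b 2)
    (by simp [hB, hb.eq_iff]) (h 2)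
  have h4 : (idB p (insert (b 2) (insert (b 1) (insert (b 0) B)))).height ≤ (idB p B').height := by
    apply Ideal.height_mono (idB_mono p _)
    intro s hs
    apply hB'
    simp only [Set.mem_insert_iff] at hs
    rcases hs with rfl | rfl | rfl | hs
    · right; simp
    · right; simp
    · right; simp
    · left; exact hs
  calc (idB p B).height + 3 = (idB p B).height + 1 + 1 + 1 := by
        rw [add_assoc, add_assoc]; norm_num
    _ ≤ _ := by
      refine le_trans ?_ (h3.trans h4)
      gcongr
      refine le_trans ?_ h2
      gcongr

lemma ht_lin (p : Ideal (MvPolynomial σ K)) [hp : p.IsPrime] {B B' : Set σ} {a b : Fin 3 → σ}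
    (hb : Function.Injective b) (hB : ∀ k, b k ∉ B) (ha : ∀ k, a k ∈ B)
    (hB' : B ∪ Set.range b ⊆ B') (h : ∑ k, X (a k) * X (b k) ∈ p) (hz : ¬ ∀ k, X (a k) ∈ p) :
    (idB p B).height + 1 ≤ (idB p B').height := by
  push Not at hz
  obtain ⟨k0, hk0⟩ := hz
  set B1 : Set σ := B ∪ b '' {k | k ≠ k0} with hB1
  have hBB1 : B ⊆ B1 := Set.subset_union_left
  have hfix : ∀ s ∈ B1, phiB p B1 (X s) = C (Ideal.Quotient.mk p (X s)) :=
    fun s hs => phiB_X_mem p hs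
  have h1 : (idB p B1).height + 1 ≤ (idB p (insert (b k0) B1)).height := by
    apply ht_insert p (a := X (a k0)) (b := ∑ k ∈ Finset.univ.erase k0, X (a k) * X (b k)) _
      (hfix _ (hBB1 (ha _))) _ hk0
    · rwa [Finset.add_sum_erase _ (fun k => X (a k) * X (b k)) (Finset.mem_univ k0)]
    · simp [hB1, hB, hb.eq_iff]
    · rw [map_sum, map_sum, map_sum]
      apply Finset.sum_congr rfl
      intro k hk
      rw [map_mul, map_mul, map_mul, hfix _ (hBB1 (ha _)), hfix]
      right
      exact ⟨k, by simpa using hk, rfl⟩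
  have h2 : (idB p B).height ≤ (idB p B1).height := Ideal.height_mono (idB_mono p hBB1)
  have h3 : (idB p (insert (b k0) B1)).height ≤ (idB p B').height := by
    apply Ideal.height_mono (idB_mono p _)
    intro s hs
    apply hB'
    rcases hs with rfl | hs | ⟨k, -, rfl⟩
    · right; simp
    · left; exact hs
    · right; simp
  refine le_trans ?_ (h1.trans h3)
  gcongr

/-- invariant -/
def PInv (p : Ideal (MvPolynomial σ K)) (a : Fin 3 → σ) (B : Set σ) (c : ℕ) : Prop :=
  (c : ℕ∞) ≤ (idB p B).height ∧ ((∀ k, X (a k) ∈ p) → ((c + 1 : ℕ) : ℕ∞) ≤ (idB p B).height)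

lemma inv_step (p : Ideal (MvPolynomial σ K)) [hp : p.IsPrime] {B B' : Set σ} {a b : Fin 3 → σ}
    (hb : Function.Injective b) (hB : ∀ k, b k ∉ B) (ha : ∀ k, a k ∈ B)
    (hB' : B ∪ Set.range b ⊆ B') (h : ∑ k, X (a k) * X (b k) ∈ p) {c : ℕ}
    (hI : PInv p a B c) : PInv p b B' (c + 1) := by
  obtain ⟨h1, h2⟩ := hI
  have hm : (idB p B).height ≤ (idB p B').height :=
    Ideal.height_mono (idB_mono p (Set.subset_union_left.trans hB'))
  constructor
  · by_cases hz : ∀ k, X (a k) ∈ p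
    · exact (h2 hz).trans hm
    · refine le_trans ?_ (ht_lin p hb hB ha hB' h hz)
      push_cast
      gcongr
  · intro hz
    refine le_trans ?_ (ht_zero p hb hB hB' hz)
    have : ((c + 1 + 1 : ℕ) : ℕ∞) ≤ (c : ℕ∞) + 3 := by
      exact_mod_cast (by omega : c + 1 + 1 ≤ c + 3)
    refine this.trans ?_
    gcongr

end general

section arms
variable {K : Type} [Field K] {n : ℕ}

/-- the vertex `m` (`0`-based) -/
def vtx (m : ℕ) (h : m < n) : Fin 3 → Fin n × Fin 3 := fun k => (⟨m, h⟩, k)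

def seg (n i m : ℕ) : Set (Fin n × Fin 3) := {s | i ≤ s.1.1 ∧ s.1.1 ≤ m}

def IsPathPt (p : Ideal (MvPolynomial (Fin n × Fin 3) K)) : Prop :=
  ∀ m (h : m + 1 < n), ∑ k, X (vtx m (by omega) k) * X (vtx (m + 1) h k) ∈ p

lemma vtx_inj (m : ℕ) (h : m < n) : Function.Injective (vtx m h) := by
  intro k l hkl
  simpa [vtx] using hkl

lemma right_arm (p : Ideal (MvPolynomial (Fin n × Fin 3) K)) [p.IsPrime] (hp : IsPathPt p)
    {i : ℕ} (hi : i < n) {c : ℕ} (hI : PInv p (vtx i hi) (seg n i i) c) :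
    ∀ m (h : i + m < n), PInv p (vtx (i + m) h) (seg n i (i + m)) (c + m) := by
  intro m
  induction m with
  | zero => intro h; exact hI
  | succ m ih =>
    intro h
    apply inv_step p (vtx_inj _ _) _ _ _ (hp (i + m) h) (ih (by omega))
    · intro k; simp [vtx, seg]
    · intro k; simp [vtx, seg]
    · rintro s (hs | ⟨k, rfl⟩)
      · simp only [seg, Set.mem_ofPred_eq] at *; omega
      · simp only [seg, vtx, Set.mem_ofPred_eq] at *; omega

lemma left_arm (p : Ideal (MvPolynomial (Fin n × Fin 3) K)) [p.IsPrime] (hp : IsPathPt p)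
    {i : ℕ} (hi : i < n) {c : ℕ} (hI : PInv p (vtx i hi) (seg n i (n - 1)) c) :
    ∀ m (h : m ≤ i), PInv p (vtx (i - m) (by omega)) (seg n (i - m) (n - 1)) (c + m) := by
  intro m
  induction m with
  | zero => intro h; exact hI
  | succ m ih =>
    intro h
    apply inv_step p (vtx_inj _ _) _ _ _ _ (ih (by omega))
    · intro k; simp only [seg, vtx, Set.mem_ofPred_eq]; omega
    · intro k; simp only [seg, vtx, Set.mem_ofPred_eq]; omega
    · rintro s (hs | ⟨k, rfl⟩)
      · simp only [seg, Set.mem_ofPred_eq] at *; omega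
      · simp only [seg, vtx, Set.mem_ofPred_eq] at *; omega
    · have h1 := hp (i - (m + 1)) (by omega)
      have h2 : i - (m + 1) + 1 = i - m := by omega
      simp only [h2] at h1
      simpa only [mul_comm] using h1

lemma ht_path (p : Ideal (MvPolynomial (Fin n × Fin 3) K)) [p.IsPrime] (hp : IsPathPt p)
    {i : ℕ} (hi : i < n) {c : ℕ} (hc : c ≤ 1) (hI : (c : ℕ∞) ≤ (idB p (seg n i i)).height) :
    ((c + (n - 1) : ℕ) : ℕ∞) ≤ p.height := by
  have huniv : seg n 0 (n - 1) = Set.univ := by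
    ext s; simp only [seg, Set.mem_ofPred_eq, Set.mem_univ, iff_true]; omega
  have h3 : (∀ k, X (vtx i hi k) ∈ p) → ((3 : ℕ) : ℕ∞) ≤ (idB p (seg n i i)).height := by
    intro h
    refine le_trans ?_ (ht_zero p (B := ∅) (vtx_inj i hi) (by simp) ?_ h)
    · simp
    · rintro s (hs | ⟨k, rfl⟩)
      · exact hs.elim
      · simp [vtx, seg]
  have e : i + (n - 1 - i) = n - 1 := by omega
  have key : PInv p (vtx i hi) (seg n i (n - 1)) (c + (n - 1 - i)) := by
    constructor
    · have := right_arm p hp hi (c := c)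
        ⟨hI, fun h => le_trans (by exact_mod_cast (by omega)) (h3 h)⟩ (n - 1 - i) (by omega)
      simp only [e] at this
      exact this.1
    · intro h
      have := right_arm p hp hi (c := 2)
        ⟨le_trans (by exact_mod_cast (by omega)) (h3 h), fun h => h3 h⟩ (n - 1 - i) (by omega)
      simp only [e] at this
      exact le_trans (by exact_mod_cast (by omega)) this.1
  have := (left_arm p hp hi key i le_rfl).1
  simp only [Nat.sub_self, huniv, idB_univ] at this
  exact le_trans (by exact_mod_cast (by omega)) this

end arms

section quotient
variable {R : Type*} [CommRing R]

lemma idealHeight_le {I p : Ideal R} (hp : p.IsPrime) (h : I ≤ p) : idealHeight I ≤ p.height := by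
  rw [show p.height = Order.height (⟨p, hp⟩ : PrimeSpectrum R) from
    PrimeSpectrum.height_eq_orderHeight ⟨p, hp⟩]
  exact iInf_le (fun q : {q : PrimeSpectrum R // I ≤ q.asIdeal} => Order.height q.1)
    ⟨⟨p, hp⟩, h⟩

lemma le_idealHeight {I : Ideal R} {c : ℕ∞} (h : ∀ p : Ideal R, p.IsPrime → I ≤ p → c ≤ p.height) :
    c ≤ idealHeight I := by
  refine le_iInf ?_
  rintro ⟨p, hp⟩
  rw [← PrimeSpectrum.height_eq_orderHeight]
  exact h _ p.2 hp

lemma height_quot {L I : Ideal R} {m : ℕ} (hLI : L ≤ I)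
    (hlow : ∀ p : Ideal R, p.IsPrime → I ≤ p → ((m + 1 : ℕ) : ℕ∞) ≤ p.height)
    (hup : ∃ p : Ideal R, p.IsPrime ∧ I ≤ p ∧ p.height ≤ ((m + 1 : ℕ) : ℕ∞))
    (hLlow : ∀ p : Ideal R, p.IsPrime → L ≤ p → (m : ℕ∞) ≤ p.height)
    (hLup : ∀ p ∈ L.minimalPrimes, p.height ≤ (m : ℕ∞)) :
    idealHeight I = ((m + 1 : ℕ) : ℕ∞) ∧
      idealHeight (Ideal.map (Ideal.Quotient.mk L) I) = 1 := by
  obtain ⟨p, hp, hIp, hpm⟩ := hup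
  have hsurj : Function.Surjective (Ideal.Quotient.mk L) := Ideal.Quotient.mk_surjective
  have hLle : ∀ P : Ideal (R ⧸ L), L ≤ P.comap (Ideal.Quotient.mk L) := by
    intro P x hx
    rw [Ideal.mem_comap, Ideal.Quotient.eq_zero_iff_mem.2 hx]
    exact P.zero_mem
  have hlt : ∀ P Q : Ideal (R ⧸ L), P < Q →
      P.comap (Ideal.Quotient.mk L) < Q.comap (Ideal.Quotient.mk L) := by
    intro P Q h
    refine lt_of_le_of_ne (Ideal.comap_mono h.le) ?_
    intro he
    exact h.ne (Ideal.comap_injective_of_surjective _ hsurj he)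
  refine ⟨le_antisymm ((idealHeight_le hp hIp).trans hpm) (le_idealHeight hlow), le_antisymm ?_ ?_⟩
  · have hLp : L ≤ p := hLI.trans hIp
    have hP : (p.map (Ideal.Quotient.mk L)).IsPrime := Ideal.isPrime_map_quotientMk_of_isPrime hLp
    refine (idealHeight_le hP (Ideal.map_mono hIp)).trans ?_
    rw [show (p.map (Ideal.Quotient.mk L)).height = Order.height (⟨_, hP⟩ : PrimeSpectrum (R ⧸ L))
      from PrimeSpectrum.height_eq_orderHeight ⟨_, hP⟩]
    by_contra hcon
    have h2 : ((2 : ℕ) : ℕ∞) ≤ Order.height (⟨_, hP⟩ : PrimeSpectrum (R ⧸ L)) := by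
      have := Order.add_one_le_of_lt (not_le.1 hcon)
      rwa [one_add_one_eq_two] at this
    obtain ⟨s, hs, hlen⟩ := Order.exists_series_of_le_height _ h2
    have h01 : s 0 < s 1 := s.rel_of_lt (by simp [Fin.lt_def, hlen])
    have h12 : s 1 < ⟨_, hP⟩ := hs ▸ s.rel_of_lt (by simp [Fin.lt_def, hlen])
    have e : (p.map (Ideal.Quotient.mk L)).comap (Ideal.Quotient.mk L) = p := by
      rw [Ideal.comap_map_of_surjective' _ hsurj, Ideal.mk_ker]
      exact sup_eq_left.2 hLp
    have g01 := hlt _ _ h01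
    have g12 := hlt _ _ h12
    rw [e] at g12
    have i0 : ((s 0).asIdeal.comap (Ideal.Quotient.mk L)).IsPrime :=
      Ideal.IsPrime.comap _ (hK := (s 0).2)
    have i1 : ((s 1).asIdeal.comap (Ideal.Quotient.mk L)).IsPrime :=
      Ideal.IsPrime.comap _ (hK := (s 1).2)
    have j0 := hLlow _ i0 (hLle _)
    have j1 := Ideal.height_add_one_le_of_lt_of_isPrime g01
    have j2 := Ideal.height_add_one_le_of_lt_of_isPrime g12
    have j3 : (m : ℕ∞) + 1 + 1 ≤ ((m + 1 : ℕ) : ℕ∞) := by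
      refine le_trans ?_ (j2.trans hpm)
      gcongr
      refine le_trans ?_ j1
      gcongr
    have : m + 1 + 1 ≤ m + 1 := by exact_mod_cast j3
    omega
  · apply le_idealHeight
    intro P hP hIP
    rw [Order.one_le_iff_ne_zero]
    intro h0
    rw [Ideal.height_eq_zero_iff] at h0
    have ip : (P.comap (Ideal.Quotient.mk L)).IsPrime := Ideal.IsPrime.comap _
    have h1 := hlow _ ip (Ideal.map_le_iff_le_comap.1 hIP)
    have h2 : P.comap (Ideal.Quotient.mk L) ∈ L.minimalPrimes := by
      refine ⟨⟨ip, hLle _⟩, ?_⟩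
      rintro q ⟨hq, hLq⟩ hqP
      have hq' : (q.map (Ideal.Quotient.mk L)).IsPrime :=
        Ideal.isPrime_map_quotientMk_of_isPrime hLq
      have h3 : q.map (Ideal.Quotient.mk L) ≤ P := Ideal.map_le_iff_le_comap.2 hqP
      have h4 : P ≤ q.map (Ideal.Quotient.mk L) := h0.2 ⟨hq', bot_le⟩ h3
      have h5 := Ideal.comap_mono (f := Ideal.Quotient.mk L) h4
      rwa [Ideal.comap_map_of_surjective' _ hsurj, Ideal.mk_ker, sup_eq_left.2 hLq] at h5
    have h6 := h1.trans (hLup _ h2)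
    have : m + 1 ≤ m := by exact_mod_cast h6
    omega

end quotient

section path
variable (K : Type) [Field K] (n : ℕ)

lemma yvar_eq_s13 (m : ℕ) (h : m < n) (k : Fin 3) :
    yvar K n (m + 1) (k.1 + 1) = X (vtx m h k) := by
  rw [yvar, dif_pos ⟨by omega, by omega, by omega, by omega⟩]
  rfl

lemma pathGen_expand (i a : ℕ) : pathGen K n a = yvar K n a 1 * yvar K n (a + 1) 1 +
    yvar K n a (kcol i) * yvar K n (a + 1) (kcol i) +
    yvar K n a (khat i) * yvar K n (a + 1) (khat i) := by
  rw [pathGen, Fin.sum_univ_three]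
  unfold kcol khat
  split_ifs
  · rfl
  · simp only [Fin.val_zero, Fin.val_one, Fin.val_two]
    ring

lemma pathLSS_isPathPt {p : Ideal (MvPolynomial (Fin n × Fin 3) K)} (h : pathLSS K n ≤ p) :
    IsPathPt p := by
  intro m hm
  have h1 : pathGen K n (m + 1) ∈ p := h (Ideal.subset_span ⟨m + 1, by omega, by omega, rfl⟩)
  have h2 : pathGen K n (m + 1) = ∑ k, X (vtx m (by omega) k) * X (vtx (m + 1) hm k) := by
    unfold pathGen
    refine Finset.sum_congr rfl fun k _ => ?_
    rw [yvar_eq_s13, yvar_eq_s13]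
  rwa [← h2]

/-- auxiliary complete intersection `L + (y_{i k̂})` -/
noncomputable def Jideal (i : ℕ) : Ideal (MvPolynomial (Fin n × Fin 3) K) :=
  Ideal.span (insert (yvar K n i (khat i)) {g | ∃ a : ℕ, 1 ≤ a ∧ a + 1 ≤ n ∧ g = pathGen K n a})

lemma Jideal_le {i : ℕ} {I : Ideal (MvPolynomial (Fin n × Fin 3) K)} :
    Jideal K n i ≤ I ↔ yvar K n i (khat i) ∈ I ∧
      ∀ a : ℕ, 1 ≤ a → a + 1 ≤ n → pathGen K n a ∈ I := by
  rw [Jideal, Ideal.span_le, Set.insert_subset_iff]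
  refine and_congr Iff.rfl ⟨fun h a h1 h2 => h ⟨a, h1, h2, rfl⟩, ?_⟩
  rintro h _ ⟨a, h1, h2, rfl⟩
  exact h a h1 h2

lemma pathLSS_le_Jideal (i : ℕ) : pathLSS K n ≤ Jideal K n i :=
  Ideal.span_mono (Set.subset_insert _ _)

lemma low_L (hn : 3 ≤ n) (p : Ideal (MvPolynomial (Fin n × Fin 3) K)) (hp : p.IsPrime)
    (h : pathLSS K n ≤ p) : ((n - 1 : ℕ) : ℕ∞) ≤ p.height := by
  have := ht_path p (pathLSS_isPathPt K n h) (i := 0) (by omega) (c := 0) (by omega) (by simp)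
  simpa using this

lemma khat_cases (i : ℕ) : ∃ k : Fin 3, khat i = k.1 + 1 := by
  unfold khat
  split_ifs
  · exact ⟨2, rfl⟩
  · exact ⟨1, rfl⟩

lemma low_J {i : ℕ} (hi : 1 ≤ i) (hin : i ≤ n) (p : Ideal (MvPolynomial (Fin n × Fin 3) K))
    (hp : p.IsPrime) (h : Jideal K n i ≤ p) : ((n - 1 + 1 : ℕ) : ℕ∞) ≤ p.height := by
  obtain ⟨j, rfl⟩ : ∃ j, i = j + 1 := ⟨i - 1, by omega⟩
  have h1 := ((Jideal_le K n).1 h).1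
  obtain ⟨k, hk⟩ := khat_cases (j + 1)
  rw [hk, yvar_eq_s13 K n j (by omega)] at h1
  have := ht_path p (pathLSS_isPathPt K n ((pathLSS_le_Jideal K n _).trans h)) (i := j) (by omega)
    (c := 1) le_rfl ?_
  · rwa [add_comm] at this
  · refine le_trans ?_ ((ht_insert_zero p (Set.notMem_empty _) h1).trans
      (Ideal.height_mono (idB_mono p ?_)))
    · simp
    · intro s hs
      obtain rfl : s = _ := hs.resolve_right (Set.notMem_empty _)
      simp [seg, vtx]

lemma genset_eq : {g | ∃ a : ℕ, 1 ≤ a ∧ a + 1 ≤ n ∧ g = pathGen K n a} =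
    pathGen K n '' (Finset.Ico 1 n : Finset ℕ) := by
  ext g
  simp only [Set.mem_ofPred_eq, Set.mem_image, Finset.coe_Ico, Set.mem_Ico]
  constructor
  · rintro ⟨a, h1, h2, rfl⟩
    exact ⟨a, ⟨h1, by omega⟩, rfl⟩
  · rintro ⟨a, ⟨h1, h2⟩, rfl⟩
    exact ⟨a, h1, by omega, rfl⟩

lemma exset_eq (i : ℕ) :
    {g | ∃ a : ℕ, 1 ≤ a ∧ a + 1 ≤ n ∧ a ≠ i - 1 ∧ a ≠ i ∧ g = pathGen K n a} =
    pathGen K n '' (((Finset.Ico 1 n).erase (i - 1)).erase i : Finset ℕ) := by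
  ext g
  simp only [Set.mem_ofPred_eq, Set.mem_image, SetLike.mem_coe, Finset.mem_erase, Finset.mem_Ico]
  constructor
  · rintro ⟨a, h1, h2, h3, h4, rfl⟩
    exact ⟨a, ⟨h4, h3, h1, by omega⟩, rfl⟩
  · rintro ⟨a, ⟨h4, h3, h1, h2⟩, rfl⟩
    exact ⟨a, h1, by omega, h3, h4, rfl⟩

lemma krull_aux (s : Finset ℕ) (t : Finset (MvPolynomial (Fin n × Fin 3) K))
    {p : Ideal (MvPolynomial (Fin n × Fin 3) K)} {c : ℕ} (hc : t.card + s.card ≤ c)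
    (hp : p ∈ (Ideal.span ((t : Set _) ∪ pathGen K n '' (s : Set ℕ))).minimalPrimes) :
    p.height ≤ (c : ℕ∞) := by
  classical
  rw [← Finset.coe_image, ← Finset.coe_union] at hp
  refine (Ideal.height_le_card_of_mem_minimalPrimes_span_finset hp).trans ?_
  have h1 := Finset.card_union_le t (s.image (pathGen K n))
  have h2 : (s.image (pathGen K n)).card ≤ s.card := Finset.card_image_le
  exact_mod_cast (by omega)

lemma up_L (p) (hp : p ∈ (pathLSS K n).minimalPrimes) : p.height ≤ ((n - 1 : ℕ) : ℕ∞) := by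
  rw [pathLSS, genset_eq] at hp
  exact krull_aux K n (Finset.Ico 1 n) ∅ (by simp) (by simpa using hp)

lemma up_J {i : ℕ} (p) (hp : p ∈ (Jideal K n i).minimalPrimes) :
    p.height ≤ ((n - 1 + 1 : ℕ) : ℕ∞) := by
  rw [Jideal, genset_eq, Set.insert_eq] at hp
  exact krull_aux K n (Finset.Ico 1 n) {yvar K n i (khat i)} (by simp [add_comm]) (by simpa using hp)

lemma up_P {i : ℕ} (hi : 2 ≤ i) (hin : i + 1 ≤ n) (p) (hp : p ∈ (Pideal K n i).minimalPrimes) :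
    p.height ≤ ((n - 1 + 1 : ℕ) : ℕ∞) := by
  classical
  rw [Pideal, exceptIdeal, exset_eq, ← Ideal.span_union] at hp
  refine krull_aux K n (((Finset.Ico 1 n).erase (i - 1)).erase i)
    {yvar K n i 1, yvar K n i 2, yvar K n i 3} ?_ (by simpa using hp)
  rw [Finset.card_erase_of_mem, Finset.card_erase_of_mem, Nat.card_Ico]
  · have := Finset.card_le_three (a := yvar K n i 1) (b := yvar K n i 2) (c := yvar K n i 3)
    omega
  · simp only [Finset.mem_Ico]; omega
  · simp only [Finset.mem_erase, Finset.mem_Ico]; omega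

lemma exceptIdeal_mem {i a : ℕ} (h1 : 1 ≤ a) (h2 : a + 1 ≤ n) (h3 : a ≠ i - 1) (h4 : a ≠ i) :
    pathGen K n a ∈ exceptIdeal K n i :=
  Ideal.subset_span ⟨a, h1, h2, h3, h4, rfl⟩

lemma J_le_P {i : ℕ} (hi : 2 ≤ i) : Jideal K n i ≤ Pideal K n i := by
  have hy : ∀ c, c = 1 ∨ c = 2 ∨ c = 3 → yvar K n i c ∈ Pideal K n i := by
    intro c hc
    apply Ideal.mem_sup_left
    apply Ideal.subset_span
    rcases hc with rfl | rfl | rfl <;> simp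
  have hk : yvar K n i (kcol i) ∈ Pideal K n i := hy _ (by unfold kcol; split_ifs <;> simp)
  have hk' : yvar K n i (khat i) ∈ Pideal K n i := hy _ (by unfold khat; split_ifs <;> simp)
  have h1 := hy 1 (by simp)
  rw [Jideal_le]
  refine ⟨hk', ?_⟩
  intro a ha1 ha2
  by_cases h3 : a = i - 1
  · subst h3
    rw [pathGen_expand K n i, show i - 1 + 1 = i by omega]
    exact add_mem (add_mem (Ideal.mul_mem_left _ _ h1) (Ideal.mul_mem_left _ _ hk))
      (Ideal.mul_mem_left _ _ hk')
  by_cases h4 : a = i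
  · subst h4
    rw [pathGen_expand K n a]
    exact add_mem (add_mem (Ideal.mul_mem_right _ _ h1) (Ideal.mul_mem_right _ _ hk))
      (Ideal.mul_mem_right _ _ hk')
  exact Ideal.mem_sup_right (exceptIdeal_mem K n ha1 ha2 h3 h4)

lemma J_le_Q {i : ℕ} (hi : 2 ≤ i) : Jideal K n i ≤ Qideal K n i := by
  have hk' : yvar K n i (khat i) ∈ Qideal K n i :=
    Ideal.mem_sup_left (Ideal.subset_span (by simp))
  rw [Jideal_le]
  refine ⟨hk', ?_⟩
  intro a ha1 ha2
  by_cases h3 : a = i - 1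
  · subst h3
    rw [pathGen_expand K n i, show i - 1 + 1 = i by omega]
    exact add_mem (Ideal.mem_sup_left (Ideal.subset_span (by simp))) (Ideal.mul_mem_left _ _ hk')
  by_cases h4 : a = i
  · subst h4
    rw [pathGen_expand K n a]
    refine add_mem (Ideal.mem_sup_left (Ideal.subset_span ?_)) (Ideal.mul_mem_right _ _ hk')
    right; left
    ring
  exact Ideal.mem_sup_right (exceptIdeal_mem K n ha1 ha2 h3 h4)

lemma Q_le {i : ℕ} (hi : 2 ≤ i) (hin : i + 1 ≤ n) (p : Ideal (MvPolynomial (Fin n × Fin 3) K))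
    (hp : p.IsPrime) (hJ : Jideal K n i ≤ p) (h1 : yvar K n i 1 ∉ p) : Qideal K n i ≤ p := by
  obtain ⟨hk, hL⟩ := (Jideal_le K n).1 hJ
  have hA : yvar K n (i - 1) 1 * yvar K n i 1 +
      yvar K n (i - 1) (kcol i) * yvar K n i (kcol i) ∈ p := by
    have h := hL (i - 1) (by omega) (by omega)
    rw [pathGen_expand K n i, show i - 1 + 1 = i by omega] at h
    exact (Ideal.add_mem_iff_left _ (Ideal.mul_mem_left _ _ hk)).1 h
  have hB : yvar K n (i + 1) 1 * yvar K n i 1 +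
      yvar K n (i + 1) (kcol i) * yvar K n i (kcol i) ∈ p := by
    have h := hL i (by omega) (by omega)
    rw [pathGen_expand K n i] at h
    have h' := (Ideal.add_mem_iff_left _ (Ideal.mul_mem_right _ _ hk)).1 h
    simpa only [mul_comm] using h'
  have hD : yvar K n (i - 1) 1 * yvar K n (i + 1) (kcol i) -
         yvar K n (i - 1) (kcol i) * yvar K n (i + 1) 1 ∈ p := by
    refine (hp.mem_or_mem (y := yvar K n i 1) ?_).resolve_right h1
    have := sub_mem (Ideal.mul_mem_left p (yvar K n (i + 1) (kcol i)) hA)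
      (Ideal.mul_mem_left p (yvar K n (i - 1) (kcol i)) hB)
    convert this using 1
    ring
  refine sup_le ?_ ?_
  · rw [Ideal.span_le]
    rintro g (rfl | rfl | rfl | rfl)
    · exact hA
    · exact hB
    · exact hD
    · exact hk
  · rw [exceptIdeal, Ideal.span_le]
    rintro g ⟨a, ha1, ha2, -, -, rfl⟩
    exact hL a ha1 ha2

lemma up_Q {i : ℕ} (hi : 2 ≤ i) (hin : i + 1 ≤ n) :
    ∃ p : Ideal (MvPolynomial (Fin n × Fin 3) K), p.IsPrime ∧ Qideal K n i ≤ p ∧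
      p.height ≤ ((n - 1 + 1 : ℕ) : ℕ∞) := by
  classical
  set pt : Fin n × Fin 3 → K := fun s => if s.1.1 + 1 = i ∧ s.2.1 = 0 then 1 else 0 with hpt
  set M := RingHom.ker (eval pt) with hM
  have hMp : M.IsPrime := RingHom.ker_isPrime _
  have hev : ∀ a c, a ≠ i ∨ c ≠ 1 → eval pt (yvar K n a c) = 0 := by
    intro a c h
    unfold yvar
    split_ifs with hh
    · rw [eval_X, hpt]
      simp only
      rw [if_neg (by omega)]
    · simp
  have hev1 : eval pt (yvar K n i 1) = 1 := by
    unfold yvar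
    rw [dif_pos ⟨by omega, by omega, by omega, by omega⟩, eval_X, hpt]
    simp only
    rw [if_pos ⟨by omega, trivial⟩]
  have hJM : Jideal K n i ≤ M := by
    rw [Jideal_le]
    constructor
    · rw [hM, RingHom.mem_ker]
      apply hev
      right
      unfold khat
      split_ifs <;> omega
    · intro a _ _
      rw [hM, RingHom.mem_ker, pathGen, map_sum]
      apply Finset.sum_eq_zero
      intro k _
      rw [map_mul]
      by_cases ha : a = i
      · rw [hev (a + 1) _ (by omega), mul_zero]
      · rw [hev a _ (by omega), zero_mul]
  obtain ⟨p, hp, hpM⟩ := Ideal.exists_minimalPrimes_le hJM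
  refine ⟨p, hp.1.1, Q_le K n hi hin p hp.1.1 hp.1.2 ?_, up_J K n p hp⟩
  intro h
  have := hpM h
  rw [hM, RingHom.mem_ker, hev1] at this
  exact one_ne_zero this

lemma ex_P {i : ℕ} (hi : 2 ≤ i) (hin : i + 1 ≤ n) :
    ∃ p : Ideal (MvPolynomial (Fin n × Fin 3) K), p.IsPrime ∧ Pideal K n i ≤ p ∧
      p.height ≤ ((n - 1 + 1 : ℕ) : ℕ∞) := by
  set M := RingHom.ker (eval (fun _ : Fin n × Fin 3 => (0 : K))) with hM
  have hMp : M.IsPrime := RingHom.ker_isPrime _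
  have hy : ∀ a c, yvar K n a c ∈ M := by
    intro a c
    rw [hM, RingHom.mem_ker]
    unfold yvar
    split_ifs <;> simp
  have hPM : Pideal K n i ≤ M := by
    refine sup_le ?_ ?_
    · rw [Ideal.span_le]
      rintro g (rfl | rfl | rfl) <;> exact hy _ _
    · rw [exceptIdeal, Ideal.span_le]
      rintro g ⟨a, ha1, ha2, -, -, rfl⟩
      exact sum_mem fun k _ => Ideal.mul_mem_left _ _ (hy _ _)
  obtain ⟨p, hp, -⟩ := Ideal.exists_minimalPrimes_le hPM
  exact ⟨p, hp.1.1, hp.1.2, up_P K n hi hin p hp⟩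

end path

/-- For the `n`-path graph with `n ≥ 3` and `d = 3`, the ideals `P_i` and `Q_i`
(`i = 2, …, n-1`) have height `n` in `S`; equivalently, their images in
`R_G(3) = S ⧸ L_G(3)` have height `1`. -/
theorem path_P_Q_height (K : Type) [Field K] (n : ℕ) (hn : 3 ≤ n) :
    ∀ i : ℕ, 2 ≤ i → i + 1 ≤ n →
      idealHeight (Pideal K n i) = (n : ℕ∞) ∧
      idealHeight (Qideal K n i) = (n : ℕ∞) ∧
      idealHeight (Ideal.map (Ideal.Quotient.mk (pathLSS K n)) (Pideal K n i)) = 1 ∧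
      idealHeight (Ideal.map (Ideal.Quotient.mk (pathLSS K n)) (Qideal K n i)) = 1 := by
  intro i hi hin
  have hP := height_quot ((pathLSS_le_Jideal K n i).trans (J_le_P K n hi))
    (fun p hp h => low_J K n (by omega) (by omega) p hp ((J_le_P K n hi).trans h))
    (ex_P K n hi hin) (low_L K n hn) (up_L K n)
  have hQ := height_quot ((pathLSS_le_Jideal K n i).trans (J_le_Q K n hi))
    (fun p hp h => low_J K n (by omega) (by omega) p hp ((J_le_Q K n hi).trans h))
    (up_Q K n hi hin) (low_L K n hn) (up_L K n)
  rw [show n - 1 + 1 = n by omega] at hP hQ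
  exact ⟨hP.1, hQ.1, hP.2, hQ.2⟩
end
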